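/- arXiv:2604.25739 — 2 statements merged into one kernel-verified Lean document; each statement's English description precedes it below -/
import Mathlib

section
/- For every e ∈ ℝ⁴ with ‖e‖ = 1, the function (x₁, x₂) ↦ 1/(‖x₁‖²‖x₁ − x₂‖²‖x₂‖²‖x₁ − e‖²‖x₂ − e‖²) is Lebesgue integrable on ℝ⁴ × ℝ⁴ and (1/π⁴) ∫_{ℝ⁴×ℝ⁴} dx₁ dx₂ / (‖x₁‖²‖x₁ − x₂‖²‖x₂‖²‖x₁ − e‖²‖x₂ − e‖²) = 6ζ(3). -/
open MeasureTheory

section PeriodHelpers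

open Set

/-- Lebesgue measure on the open unit interval. -/
noncomputable abbrev muU : Measure ℝ := volume.restrict (Ioo (0:ℝ) 1)
/-- Lebesgue measure on the positive half line. -/
noncomputable abbrev muR : Measure ℝ := volume.restrict (Ioi (0:ℝ))

lemma lint_triangle (c : ℝ) (F : ℝ → ℝ → ENNReal) (hF : Measurable (Function.uncurry F)) :
    ∫⁻ x in Ioo 0 c, ∫⁻ y in Ioo x c, F x y = ∫⁻ y in Ioo 0 c, ∫⁻ x in Ioo 0 y, F x y := by
  have hS : MeasurableSet {z : ℝ × ℝ | 0 < z.1 ∧ z.1 < z.2 ∧ z.2 < c} := by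
    apply MeasurableSet.inter (measurableSet_lt measurable_const measurable_fst)
    exact MeasurableSet.inter (measurableSet_lt measurable_fst measurable_snd)
      (measurableSet_lt measurable_snd measurable_const)
  have h1 : ∫⁻ x in Ioo 0 c, ∫⁻ y in Ioo x c, F x y = ∫⁻ x, ∫⁻ y,
      ({z : ℝ × ℝ | 0 < z.1 ∧ z.1 < z.2 ∧ z.2 < c}).indicator (Function.uncurry F) (x, y) := by
    rw [← lintegral_indicator measurableSet_Ioo]
    refine lintegral_congr fun x => ?_
    by_cases hx : x ∈ Ioo 0 c
    · rw [indicator_of_mem hx, ← lintegral_indicator measurableSet_Ioo]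
      refine lintegral_congr fun y => ?_
      simp only [indicator, mem_Ioo, mem_ofPred_eq, Function.uncurry]
      have := hx.1
      simp [this]
    · rw [indicator_of_notMem hx]
      symm
      rw [lintegral_eq_zero_of_ae_eq_zero]
      refine Filter.Eventually.of_forall fun y => ?_
      simp only [Pi.zero_apply]
      rw [indicator_of_notMem]
      intro h
      exact hx ⟨h.1, h.2.1.trans h.2.2⟩
  have h2 : ∫⁻ y in Ioo 0 c, ∫⁻ x in Ioo 0 y, F x y = ∫⁻ y, ∫⁻ x,
      ({z : ℝ × ℝ | 0 < z.1 ∧ z.1 < z.2 ∧ z.2 < c}).indicator (Function.uncurry F) (x, y) := by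
    rw [← lintegral_indicator measurableSet_Ioo]
    refine lintegral_congr fun y => ?_
    by_cases hy : y ∈ Ioo 0 c
    · rw [indicator_of_mem hy, ← lintegral_indicator measurableSet_Ioo]
      refine lintegral_congr fun x => ?_
      simp only [indicator, mem_Ioo, mem_ofPred_eq, Function.uncurry]
      have := hy.2
      simp [this]
    · rw [indicator_of_notMem hy]
      symm
      rw [lintegral_eq_zero_of_ae_eq_zero]
      refine Filter.Eventually.of_forall fun x => ?_
      simp only [Pi.zero_apply]
      rw [indicator_of_notMem]
      intro h
      exact hy ⟨h.1.trans h.2.1, h.2.2⟩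
  rw [h1, h2]
  exact lintegral_lintegral_swap (hF.indicator hS).aemeasurable

lemma lint_sym (F : ℝ → ℝ → ENNReal) (hF : Measurable (Function.uncurry F))
    (hs : ∀ x ∈ Ioo (0:ℝ) 1, ∀ y ∈ Ioo (0:ℝ) 1, F x y = F y x) :
    ∫⁻ x, ∫⁻ y, F x y ∂muU ∂muU = 2 * ∫⁻ x in Ioo 0 1, ∫⁻ y in Ioo 0 x, F x y := by
  have h1 : ∀ x ∈ Ioo (0:ℝ) 1, ∫⁻ y, F x y ∂muU
      = (∫⁻ y in Ioo 0 x, F x y) + ∫⁻ y in Ioo x 1, F x y := by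
    intro x hx
    have : Ioo (0:ℝ) 1 = Ioc 0 x ∪ Ioo x 1 := (Ioc_union_Ioo_eq_Ioo hx.1.le hx.2).symm
    rw [muU, this, lintegral_union measurableSet_Ioo, Measure.restrict_congr_set Ioo_ae_eq_Ioc.symm]
    exact Set.disjoint_left.2 fun a ha hb => not_lt.2 ha.2 hb.1
  rw [setLIntegral_congr_fun measurableSet_Ioo h1, lintegral_add_right', lint_triangle 1 F hF, two_mul]
  · congr 1
    refine setLIntegral_congr_fun measurableSet_Ioo fun x hx => ?_
    refine setLIntegral_congr_fun measurableSet_Ioo fun y hy => ?_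
    exact hs _ ⟨hy.1, hy.2.trans hx.2⟩ _ hx
  · have : Measurable fun x => ∫⁻ y, ({z : ℝ × ℝ | z.1 < z.2 ∧ z.2 < 1}).indicator
        (Function.uncurry F) (x, y) := by
      apply Measurable.lintegral_prod_right'
      apply hF.indicator
      exact MeasurableSet.inter (measurableSet_lt measurable_fst measurable_snd)
        (measurableSet_lt measurable_snd measurable_const)
    convert this.aemeasurable using 1
    ext x
    rw [← lintegral_indicator measurableSet_Ioo]
    rfl

lemma lint_affine (a b : ℝ) (hab : a < b) (g : ℝ → ENNReal) :
    ∫⁻ x in Ioo a b, g x = ∫⁻ s, ENNReal.ofReal (b - a) * g (a + (b - a) * s) ∂muU := by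
  have h := lintegral_image_eq_lintegral_abs_deriv_mul (s := Ioo (0:ℝ) 1)
    (f := fun s => a + (b - a) * s) (f' := fun _ => b - a) measurableSet_Ioo
    (fun x _ => by simpa using (((hasDerivAt_id x).const_mul (b-a)).const_add a).hasDerivWithinAt)
    (by intro x _ y _ h; simp only [add_right_inj] at h
        exact mul_left_cancel₀ (sub_pos.2 hab).ne' h) g
  have him : (fun s => a + (b - a) * s) '' Ioo (0:ℝ) 1 = Ioo a b := by
    ext x
    simp only [mem_image, mem_Ioo]
    have := sub_pos.2 hab
    constructor
    · rintro ⟨s, ⟨h0, h1⟩, rfl⟩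
      constructor <;> nlinarith
    · rintro ⟨h0, h1⟩
      refine ⟨(x - a) / (b - a), ⟨div_pos (by linarith) this, (div_lt_one this).2 (by linarith)⟩, ?_⟩
      field_simp; ring
  rw [him, abs_of_pos (sub_pos.2 hab)] at h
  exact h

lemma lint_affine' (a b : ℝ) (hab : a < b) (g : ℝ → ENNReal) :
    ∫⁻ x in Ioo a b, g x = ∫⁻ s, ENNReal.ofReal (b - a) * g (b - (b - a) * s) ∂muU := by
  have h := lintegral_image_eq_lintegral_abs_deriv_mul (s := Ioo (0:ℝ) 1)
    (f := fun s => b - (b - a) * s) (f' := fun _ => -(b - a)) measurableSet_Ioo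
    (fun x _ => by simpa using (((hasDerivAt_id x).const_mul (b-a)).const_sub b).hasDerivWithinAt)
    (by intro x _ y _ h; simp only [sub_right_inj] at h
        exact mul_left_cancel₀ (sub_pos.2 hab).ne' h) g
  have him : (fun s => b - (b - a) * s) '' Ioo (0:ℝ) 1 = Ioo a b := by
    ext x
    simp only [mem_image, mem_Ioo]
    have := sub_pos.2 hab
    constructor
    · rintro ⟨s, ⟨h0, h1⟩, rfl⟩
      constructor <;> nlinarith
    · rintro ⟨h0, h1⟩
      refine ⟨(b - x) / (b - a), ⟨div_pos (by linarith) this, (div_lt_one this).2 (by linarith)⟩, ?_⟩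
      field_simp; ring
  rw [him, abs_neg, abs_of_pos (sub_pos.2 hab)] at h
  exact h

lemma lint_reflect (g : ℝ → ENNReal) : ∫⁻ s, g s ∂muU = ∫⁻ s, g (1 - s) ∂muU := by
  have := lint_affine' 0 1 one_pos g
  simpa using this

lemma lint_moebius (c : ℝ) (hc : 0 < c) (g : ℝ → ENNReal) :
    ∫⁻ x, g x ∂muR = ∫⁻ s, ENNReal.ofReal (c / (1 - s) ^ 2) * g (c * s / (1 - s)) ∂muU := by
  have h := lintegral_image_eq_lintegral_abs_deriv_mul (s := Ioo (0:ℝ) 1)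
    (f := fun s => c * s / (1 - s)) (f' := fun s => c / (1 - s) ^ 2) measurableSet_Ioo
    (fun x hx => by
      have hx1 : 1 - x ≠ 0 := by linarith [hx.2]
      have := (((hasDerivAt_id x).const_mul c).div ((hasDerivAt_id x).const_sub 1) hx1)
      refine HasDerivAt.hasDerivWithinAt ?_
      refine HasDerivAt.congr_deriv this ?_
      simp only [id]
      congr 1
      ring)
    (by intro x hx y hy h
        have hx1 : 1 - x ≠ 0 := by linarith [hx.2]
        have hy1 : 1 - y ≠ 0 := by linarith [hy.2]
        simp only at h
        field_simp at h
        linarith) g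
  have him : (fun s => c * s / (1 - s)) '' Ioo (0:ℝ) 1 = Ioi 0 := by
    ext x
    simp only [mem_image, mem_Ioo, mem_Ioi]
    constructor
    · rintro ⟨s, ⟨h0, h1⟩, rfl⟩
      have : 0 < 1 - s := by linarith
      positivity
    · intro h0
      have : 0 < c + x := by linarith
      refine ⟨x / (c + x), ⟨by positivity, (div_lt_one this).2 (by linarith)⟩, ?_⟩
      have : 1 - x / (c + x) = c / (c + x) := by field_simp; ring
      rw [this]
      field_simp
  rw [him] at h
  rw [muR, h]
  refine setLIntegral_congr_fun measurableSet_Ioo fun s hs => ?_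
  have : 0 < 1 - s := by linarith [hs.2]
  rw [abs_of_pos (by positivity)]

lemma lint_scale (c : ℝ) (hc : 0 < c) (g : ℝ → ENNReal) :
    ∫⁻ x, g x ∂muR = ∫⁻ s, ENNReal.ofReal c * g (c * s) ∂muR := by
  have h := lintegral_image_eq_lintegral_abs_deriv_mul (s := Ioi (0:ℝ))
    (f := fun s => c * s) (f' := fun s => c) measurableSet_Ioi
    (fun x hx => by simpa using ((hasDerivAt_id x).const_mul c).hasDerivWithinAt)
    (by intro x hx y hy h
        exact mul_left_cancel₀ hc.ne' h) g
  have him : (fun s => c * s) '' Ioi (0:ℝ) = Ioi 0 := by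
    ext x
    simp only [mem_image, mem_Ioi]
    constructor
    · rintro ⟨s, h0, rfl⟩
      positivity
    · intro h0
      exact ⟨x / c, by positivity, by field_simp⟩
  rw [him, abs_of_pos hc] at h
  exact h

lemma lint_exp (A : ℝ) (hA : 0 < A) :
    ∫⁻ p, ENNReal.ofReal (Real.exp (-(p * A))) ∂muR = ENNReal.ofReal (1 / A) := by
  have hi := integrableOn_exp_mul_Ioi (a := -A) (by linarith) 0
  have h := integral_exp_mul_Ioi (a := -A) (by linarith) 0
  have e : (fun p : ℝ => Real.exp (-(p * A))) = fun p => Real.exp (-A * p) := by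
    ext p; congr 1; ring
  rw [show (∫⁻ p, ENNReal.ofReal (Real.exp (-(p * A))) ∂muR) =
    ∫⁻ p, ENNReal.ofReal (Real.exp (-A * p)) ∂muR from by
      refine lintegral_congr fun p => ?_
      rw [show -(p * A) = -A * p by ring]]
  rw [← ofReal_integral_eq_lintegral_ofReal hi (Filter.Eventually.of_forall fun x => (Real.exp_pos _).le), h]
  simp [neg_div_neg_eq]

lemma lint_p_exp (A : ℝ) (hA : 0 < A) :
    ∫⁻ p, ENNReal.ofReal (p * Real.exp (-(p * A))) ∂muR = ENNReal.ofReal (1 / A ^ 2) := by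
  have h := Real.integral_rpow_mul_exp_neg_mul_Ioi (a := 2) (r := A) (by norm_num) hA
  have hi : IntegrableOn (fun t : ℝ => t * Real.exp (-(t * A))) (Ioi 0) := by
    by_contra hcon
    have h0 := integral_undef hcon
    have : ∫ t in Ioi (0:ℝ), t ^ ((2:ℝ) - 1) * Real.exp (-(A * t)) = 0 := by
      refine Eq.trans ?_ h0
      refine setIntegral_congr_fun (measurableSet_Ioi (a := (0:ℝ))) fun t _ => ?_
      norm_num [mul_comm]
    rw [this] at h
    have : 0 < (1 / A) ^ (2:ℝ) * Real.Gamma 2 := by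
      have := Real.Gamma_pos_of_pos (s := 2) (by norm_num)
      positivity
    linarith
  rw [← ofReal_integral_eq_lintegral_ofReal hi]
  · congr 1
    have h2 : ∫ t in Ioi (0:ℝ), t ^ ((2:ℝ) - 1) * Real.exp (-(A * t))
      = ∫ t in Ioi (0:ℝ), t * Real.exp (-(t * A)) := by
      refine setIntegral_congr_fun (measurableSet_Ioi (a := (0:ℝ))) fun t _ => ?_
      norm_num [mul_comm]
    rw [← h2, h]
    have h3 : Real.Gamma 2 = 1 := by simp
    rw [h3]
    norm_num
  · refine (ae_restrict_iff' (measurableSet_Ioi (a := (0:ℝ)))).2 (Filter.Eventually.of_forall fun t ht => ?_)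
    have : (0:ℝ) < t := ht
    simp only [Pi.zero_apply]
    positivity

lemma lint_pow (n : ℕ) (x : ℝ) (hx : 0 ≤ x) :
    ∫⁻ s in Ioo 0 x, ENNReal.ofReal (s ^ n) = ENNReal.ofReal (x ^ (n + 1) / (n + 1)) := by
  have hi : IntegrableOn (fun s : ℝ => s ^ n) (Ioo 0 x) :=
    ((continuous_pow n).integrableOn_Icc (a := 0) (b := x)).mono_set Ioo_subset_Icc_self
  rw [← ofReal_integral_eq_lintegral_ofReal hi]
  · rw [← integral_Ioc_eq_integral_Ioo, ← intervalIntegral.integral_of_le hx, integral_pow]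
    simp
  · refine (ae_restrict_iff' measurableSet_Ioo).2 (Filter.Eventually.of_forall fun t ht => ?_)
    have : (0:ℝ) < t := ht.1
    simp only [Pi.zero_apply]
    positivity

lemma lint_feyn (X Y : ℝ) (hX : 0 < X) (hY : 0 < Y) :
    ∫⁻ s, ENNReal.ofReal (1 / ((1 - s) * X + s * Y) ^ 2) ∂muU = ENNReal.ofReal (1 / (X * Y)) := by
  have hpos : ∀ s ∈ Icc (0:ℝ) 1, 0 < (1 - s) * X + s * Y := by
    intro s hs
    rcases eq_or_lt_of_le hs.1 with h | h
    · rw [← h]; simpa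
    · have : 0 ≤ (1 - s) * X := mul_nonneg (by linarith [hs.2]) hX.le
      have : 0 < s * Y := by positivity
      linarith
  have hc : ContinuousOn (fun s => 1 / ((1 - s) * X + s * Y) ^ 2) (Icc 0 1) := by
    apply ContinuousOn.div (by fun_prop) (by fun_prop)
    intro s hs
    have := hpos s hs
    positivity
  have hi : IntegrableOn (fun s => 1 / ((1 - s) * X + s * Y) ^ 2) (Ioo 0 1) :=
    (hc.integrableOn_Icc).mono_set Ioo_subset_Icc_self
  rw [← ofReal_integral_eq_lintegral_ofReal hi]
  · rw [← integral_Ioc_eq_integral_Ioo, ← intervalIntegral.integral_of_le zero_le_one]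
    congr 1
    rw [intervalIntegral.integral_eq_sub_of_hasDerivAt (f := fun s => s / (X * ((1 - s) * X + s * Y)))]
    · simp
    · intro s hs
      rw [uIcc_of_le zero_le_one] at hs
      have h0 := hpos s hs
      have h1 : HasDerivAt (fun s => X * ((1 - s) * X + s * Y)) (X * (-X + Y)) s := by
        have := ((((hasDerivAt_id s).const_sub 1).mul_const X).add
          ((hasDerivAt_id s).mul_const Y)).const_mul X
        simpa using this
      have := (hasDerivAt_id s).div h1 (by positivity)
      refine HasDerivAt.congr_deriv this ?_
      simp only [id]
      field_simp
      ring
    · apply ContinuousOn.intervalIntegrable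
      rw [uIcc_of_le zero_le_one]
      exact hc
  · refine Filter.Eventually.of_forall fun t => ?_
    simp only [Pi.zero_apply]
    positivity

/-- Four-dimensional Euclidean space. -/
abbrev E4 : Type := EuclideanSpace ℝ (Fin 4)

lemma lint_gauss0 (b : ℝ) (hb : 0 < b) (w : E4) :
    ∫⁻ x : E4, ENNReal.ofReal (Real.exp (-(b * ‖x - w‖ ^ 2))) = ENNReal.ofReal ((Real.pi / b) ^ 2) := by
  rw [lintegral_sub_right_eq_self (fun x : E4 => ENNReal.ofReal (Real.exp (-(b * ‖x‖ ^ 2)))) w]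
  have h := GaussianFourier.integral_rexp_neg_mul_sq_norm (V := E4) hb
  have hfr : ((Module.finrank ℝ E4 : ℝ) / 2) = (2 : ℕ) := by simp; norm_num
  rw [hfr, Real.rpow_natCast] at h
  have hi : Integrable (fun x : E4 => Real.exp (-(b * ‖x‖ ^ 2))) := by
    by_contra hcon
    have h0 := integral_undef hcon
    simp only [neg_mul] at h
    rw [h0] at h
    have : 0 < (Real.pi / b) ^ 2 := by have := Real.pi_pos; positivity
    linarith
  rw [← ofReal_integral_eq_lintegral_ofReal hi (Filter.Eventually.of_forall fun x => (Real.exp_pos _).le)]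
  simp only [neg_mul] at h
  rw [h]

lemma complete_sq (α β : ℝ) (h : 0 < α + β) (x u v : E4) :
    α * ‖x - u‖ ^ 2 + β * ‖x - v‖ ^ 2 =
      (α + β) * ‖x - (α + β)⁻¹ • (α • u + β • v)‖ ^ 2 + α * β / (α + β) * ‖u - v‖ ^ 2 := by
  simp only [EuclideanSpace.norm_sq_eq, Real.norm_eq_abs, sq_abs, Finset.mul_sum,
    ← Finset.sum_add_distrib]
  refine Finset.sum_congr rfl fun i _ => ?_
  simp
  field_simp
  ring

lemma lint_gauss (α β : ℝ) (h : 0 < α + β) (u v : E4) :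
    ∫⁻ x : E4, ENNReal.ofReal (Real.exp (-(α * ‖x - u‖ ^ 2 + β * ‖x - v‖ ^ 2))) =
      ENNReal.ofReal ((Real.pi / (α + β)) ^ 2 * Real.exp (-(α * β / (α + β) * ‖u - v‖ ^ 2))) := by
  simp_rw [complete_sq α β h, neg_add, Real.exp_add]
  rw [ENNReal.ofReal_mul (by positivity), ← lint_gauss0 (α + β) h ((α + β)⁻¹ • (α • u + β • v)),
    ← lintegral_mul_const' _ _ ENNReal.ofReal_ne_top]
  refine lintegral_congr fun x => ?_
  rw [ENNReal.ofReal_mul (by positivity)]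

/-- double Gaussian integral -/
lemma lint_gauss2 (p q f : ℝ) (hp : 0 < p) (hq : 0 < q) (hf : 0 < f) (u v : E4) :
    ∫⁻ y : E4, ∫⁻ x : E4, ENNReal.ofReal (Real.exp (-(p * ‖x - u‖ ^ 2 + f * ‖x - y‖ ^ 2))) *
      ENNReal.ofReal (Real.exp (-(q * ‖y - v‖ ^ 2))) =
      ENNReal.ofReal (Real.pi ^ 4 / (p * q + f * (p + q)) ^ 2 *
        Real.exp (-(p * q * f / (p * q + f * (p + q)) * ‖u - v‖ ^ 2))) := by
  have h1 : ∀ y : E4, ∫⁻ x : E4, ENNReal.ofReal (Real.exp (-(p * ‖x - u‖ ^ 2 + f * ‖x - y‖ ^ 2))) *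
      ENNReal.ofReal (Real.exp (-(q * ‖y - v‖ ^ 2))) =
      ENNReal.ofReal ((Real.pi / (p + f)) ^ 2) *
      ENNReal.ofReal (Real.exp (-(p * f / (p + f) * ‖y - u‖ ^ 2 + q * ‖y - v‖ ^ 2))) := by
    intro y
    rw [lintegral_mul_const' _ _ ENNReal.ofReal_ne_top, lint_gauss _ _ (by positivity),
      ← ENNReal.ofReal_mul (by positivity), ← ENNReal.ofReal_mul (by positivity), mul_assoc,
      ← Real.exp_add, norm_sub_rev u y]
    congr 3
    ring_nf
  simp_rw [h1]
  rw [lintegral_const_mul' _ _ ENNReal.ofReal_ne_top, lint_gauss _ _ (by positivity),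
    ← ENNReal.ofReal_mul (by positivity), ← mul_assoc]
  congr 1
  congr 1
  · field_simp
    ring
  · congr 3
    field_simp
    ring

lemma ae_diag : ∀ᵐ z : E4 × E4, z.2 - z.1 ≠ 0 := by
  have hm : MeasurableSet {z : E4 × E4 | z.2 - z.1 = 0} :=
    measurableSet_eq_fun (by fun_prop) (by fun_prop)
  have : (volume : Measure (E4 × E4)) {z : E4 × E4 | z.2 - z.1 = 0} = 0 := by
    rw [Measure.volume_eq_prod, Measure.measure_prod_null hm]
    refine Filter.Eventually.of_forall fun y => ?_
    have : Prod.mk y ⁻¹' {z : E4 × E4 | z.2 - z.1 = 0} = {y} := by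
      ext x; simp [sub_eq_zero]
    simp only [this, Pi.zero_apply]
    simp
  rw [ae_iff]
  simpa using this

/-- The Schwinger parameter integrand. -/
noncomputable def schw (a b : E4) (A B : ℝ) (z : E4 × E4) (w : ℝ × ℝ × ℝ) : ENNReal :=
  ENNReal.ofReal (w.1 * Real.exp (-(w.1 * (‖z.2 - a‖ ^ 2 + A)))) *
    (ENNReal.ofReal (w.2.1 * Real.exp (-(w.2.1 * (‖z.1 - b‖ ^ 2 + B)))) *
      ENNReal.ofReal (Real.exp (-(w.2.2 * ‖z.2 - z.1‖ ^ 2))))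

lemma schw_meas (a b : E4) (A B : ℝ) : Measurable (Function.uncurry (schw a b A B)) := by
  unfold schw Function.uncurry
  fun_prop

lemma schw_lint (a b : E4) (A B : ℝ) (hA : 0 < A) (hB : 0 < B) (z : E4 × E4) (hz : z.2 - z.1 ≠ 0) :
    ∫⁻ w, schw a b A B z w ∂(muR.prod (muR.prod muR)) =
      ENNReal.ofReal (1 / (‖z.2 - a‖ ^ 2 + A) ^ 2) * (ENNReal.ofReal (1 / (‖z.1 - b‖ ^ 2 + B) ^ 2) *
        ENNReal.ofReal (1 / ‖z.2 - z.1‖ ^ 2)) := by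
  unfold schw
  rw [lintegral_prod_mul (f := fun p : ℝ => ENNReal.ofReal (p * Real.exp (-(p * (‖z.2 - a‖ ^ 2 + A)))))
    (g := fun w : ℝ × ℝ => ENNReal.ofReal (w.1 * Real.exp (-(w.1 * (‖z.1 - b‖ ^ 2 + B)))) *
      ENNReal.ofReal (Real.exp (-(w.2 * ‖z.2 - z.1‖ ^ 2)))) (by fun_prop) (by fun_prop)]
  rw [lintegral_prod_mul (f := fun p : ℝ => ENNReal.ofReal (p * Real.exp (-(p * (‖z.1 - b‖ ^ 2 + B)))))
    (g := fun w : ℝ => ENNReal.ofReal (Real.exp (-(w * ‖z.2 - z.1‖ ^ 2)))) (by fun_prop) (by fun_prop)]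
  have : 0 < ‖z.2 - z.1‖ := norm_pos_iff.2 hz
  rw [lint_p_exp _ (by positivity), lint_p_exp _ (by positivity), lint_exp _ (by positivity)]

lemma schw_gauss (a b : E4) (A B p q f : ℝ) (hp : 0 < p) (hq : 0 < q) (hf : 0 < f) :
    ∫⁻ z, schw a b A B z (p, q, f) =
      ENNReal.ofReal (p * q * Real.exp (-(p * A + q * B)) * (Real.pi ^ 4 / (p * q + f * (p + q)) ^ 2 *
        Real.exp (-(p * q * f / (p * q + f * (p + q)) * ‖a - b‖ ^ 2)))) := by
  have hm : AEMeasurable (fun z => schw a b A B z (p, q, f)) (volume.prod volume) := by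
    unfold schw
    fun_prop
  rw [Measure.volume_eq_prod, lintegral_prod _ hm, ENNReal.ofReal_mul (by positivity),
    ← lint_gauss2 p q f hp hq hf, ← lintegral_const_mul' _ _ ENNReal.ofReal_ne_top]
  refine lintegral_congr fun y => ?_
  rw [← lintegral_const_mul' _ _ ENNReal.ofReal_ne_top]
  refine lintegral_congr fun x => ?_
  unfold schw
  simp only
  rw [← ENNReal.ofReal_mul (by positivity), ← ENNReal.ofReal_mul (by positivity),
    ← ENNReal.ofReal_mul (by positivity), ← ENNReal.ofReal_mul (by positivity)]
  congr 1
  have : ∀ x1 x2 x3 : ℝ, p * Real.exp x1 * (q * Real.exp x2 * Real.exp x3) =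
      p * q * Real.exp (x1 + x2 + x3) := by
    intro x1 x2 x3; rw [Real.exp_add, Real.exp_add]; ring
  rw [this, mul_assoc (p * q), ← Real.exp_add, ← Real.exp_add]
  congr 2
  ring

lemma schw_f (A B p q D : ℝ) (hp : 0 < p) (hq : 0 < q) :
    ∫⁻ f, ENNReal.ofReal (p * q * Real.exp (-(p * A + q * B)) * (Real.pi ^ 4 / (p * q + f * (p + q)) ^ 2 *
        Real.exp (-(p * q * f / (p * q + f * (p + q)) * D)))) ∂muR =
    ∫⁻ u, ENNReal.ofReal (Real.pi ^ 4 * (1 / (p + q) *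
      Real.exp (-(p * A + q * B + u * (p * q / (p + q)) * D)))) ∂muU := by
  rw [lint_moebius (p * q / (p + q)) (by positivity)]
  refine setLIntegral_congr_fun measurableSet_Ioo fun u hu => ?_
  have hu1 : 0 < 1 - u := by linarith [hu.2]
  have hu0 := hu.1
  rw [← ENNReal.ofReal_mul (by positivity)]
  congr 1
  have e1 : p * q + p * q / (p + q) * u / (1 - u) * (p + q) = p * q / (1 - u) := by
    field_simp; ring
  have e2 : p * q * (p * q / (p + q) * u / (1 - u)) / (p * q / (1 - u)) * D
    = u * (p * q / (p + q)) * D := by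
    field_simp
  rw [e1, e2, neg_add (p * A + q * B), Real.exp_add]
  field_simp

lemma stage2 (a b : E4) (A B : ℝ) (hA : 0 < A) (hB : 0 < B) :
    ∫⁻ z : E4 × E4, ENNReal.ofReal (1 / (‖z.2 - a‖ ^ 2 + A) ^ 2) *
      (ENNReal.ofReal (1 / (‖z.1 - b‖ ^ 2 + B) ^ 2) * ENNReal.ofReal (1 / ‖z.2 - z.1‖ ^ 2)) =
    ENNReal.ofReal (Real.pi ^ 4) *
      ∫⁻ l, ∫⁻ u, ENNReal.ofReal (1 / ((1 - l) * A + l * B + u * (l * (1 - l)) * ‖a - b‖ ^ 2)) ∂muU ∂muU := by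
  set D := ‖a - b‖ ^ 2 with hD
  have hD0 : 0 ≤ D := by positivity
  calc _ = ∫⁻ z, ∫⁻ w, schw a b A B z w ∂(muR.prod (muR.prod muR)) := by
        refine lintegral_congr_ae ?_
        filter_upwards [ae_diag] with z hz
        exact (schw_lint a b A B hA hB z hz).symm
    _ = ∫⁻ w, ∫⁻ z, schw a b A B z w ∂volume ∂(muR.prod (muR.prod muR)) :=
        lintegral_lintegral_swap (schw_meas a b A B).aemeasurable
    _ = ∫⁻ p, ∫⁻ q, ∫⁻ f, ∫⁻ z, schw a b A B z (p, q, f) ∂volume ∂muR ∂muR ∂muR := by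
        have hm : Measurable fun w => ∫⁻ z, schw a b A B z w :=
          (schw_meas a b A B).lintegral_prod_left'
        rw [lintegral_prod _ hm.aemeasurable]
        refine lintegral_congr fun p => ?_
        rw [lintegral_prod]
        exact (hm.comp measurable_prodMk_left).aemeasurable
    _ = ∫⁻ p, ∫⁻ q, ∫⁻ u, ENNReal.ofReal (Real.pi ^ 4 * (1 / (p + q) *
      Real.exp (-(p * A + q * B + u * (p * q / (p + q)) * D)))) ∂muU ∂muR ∂muR := by
        refine setLIntegral_congr_fun measurableSet_Ioi fun p hp => ?_
        refine setLIntegral_congr_fun measurableSet_Ioi fun q hq => ?_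
        rw [← schw_f A B p q D hp hq]
        refine setLIntegral_congr_fun measurableSet_Ioi fun f hf => ?_
        exact schw_gauss a b A B p q f hp hq hf
    _ = ∫⁻ p, ∫⁻ r, ∫⁻ u, ENNReal.ofReal (Real.pi ^ 4 * (1 / (1 + r) *
      Real.exp (-(p * (A + r * B + u * (r / (1 + r)) * D))))) ∂muU ∂muR ∂muR := by
        refine setLIntegral_congr_fun measurableSet_Ioi fun p hp => ?_
        have hp : 0 < p := hp
        rw [lint_scale p hp]
        refine setLIntegral_congr_fun measurableSet_Ioi fun r hr => ?_
        have hr : 0 < r := hr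
        rw [← lintegral_const_mul' _ _ ENNReal.ofReal_ne_top]
        refine lintegral_congr fun u => ?_
        rw [← ENNReal.ofReal_mul (by positivity)]
        congr 1
        have e1 : p * A + p * r * B + u * (p * (p * r) / (p + p * r)) * D =
          p * (A + r * B + u * (r / (1 + r)) * D) := by
          field_simp
        rw [e1]
        field_simp
    _ = ∫⁻ r, ∫⁻ u, ∫⁻ p, ENNReal.ofReal (Real.pi ^ 4 * (1 / (1 + r) *
      Real.exp (-(p * (A + r * B + u * (r / (1 + r)) * D))))) ∂muR ∂muU ∂muR := by
        rw [lintegral_lintegral_swap]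
        · refine lintegral_congr fun r => ?_
          rw [lintegral_lintegral_swap]
          apply Measurable.aemeasurable
          unfold Function.uncurry
          fun_prop
        · apply Measurable.aemeasurable
          unfold Function.uncurry
          apply Measurable.lintegral_prod_right'
            (f := fun z : (ℝ × ℝ) × ℝ => ENNReal.ofReal (Real.pi ^ 4 * (1 / (1 + z.1.2) *
      Real.exp (-(z.1.1 * (A + z.1.2 * B + z.2 * (z.1.2 / (1 + z.1.2)) * D))))))
          fun_prop
    _ = ∫⁻ r, ∫⁻ u, ENNReal.ofReal (Real.pi ^ 4) * ENNReal.ofReal (1 / ((1 + r) *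
      (A + r * B + u * (r / (1 + r)) * D))) ∂muU ∂muR := by
        refine setLIntegral_congr_fun measurableSet_Ioi fun r hr => ?_
        have hr : 0 < r := hr
        refine setLIntegral_congr_fun measurableSet_Ioo fun u hu => ?_
        have hu : 0 < u := hu.1
        simp_rw [ENNReal.ofReal_mul (show 0 ≤ Real.pi ^ 4 by positivity),
          ENNReal.ofReal_mul (show 0 ≤ 1 / (1 + r) by positivity)]
        rw [lintegral_const_mul' _ _ ENNReal.ofReal_ne_top,
          lintegral_const_mul' _ _ ENNReal.ofReal_ne_top, lint_exp _ (by positivity),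
          ← ENNReal.ofReal_mul (show 0 ≤ 1 / (1 + r) by positivity)]
        congr 2
        field_simp
    _ = _ := by
        rw [lint_moebius 1 one_pos, ← lintegral_const_mul' _ _ ENNReal.ofReal_ne_top]
        refine setLIntegral_congr_fun measurableSet_Ioo fun l hl => ?_
        rw [← lintegral_const_mul' _ _ ENNReal.ofReal_ne_top,
          ← lintegral_const_mul' _ _ ENNReal.ofReal_ne_top]
        refine lintegral_congr fun u => ?_
        have hl0 : 0 < l := hl.1
        have hl1 : 0 < 1 - l := by linarith [hl.2]
        rw [mul_left_comm, ← ENNReal.ofReal_mul (by positivity)]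
        congr 2
        have e1 : 1 + 1 * l / (1 - l) = 1 / (1 - l) := by field_simp; ring
        rw [e1, one_mul, div_mul_div_comm, mul_one]
        congr 1
        field_simp

lemma ae_pt (c : E4) : ∀ᵐ z : E4 × E4, z.1 - c ≠ 0 ∧ z.2 - c ≠ 0 := by
  have h0 : ∀ᵐ x : E4, x - c ≠ 0 := by
    rw [ae_iff]
    have : {a : E4 | ¬a - c ≠ 0} = {c} := by ext x; simp [sub_eq_zero]
    rw [this]; simp
  have h1 : ∀ᵐ z : E4 × E4, z.1 - c ≠ 0 := Measure.quasiMeasurePreserving_fst.ae h0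
  have h2 : ∀ᵐ z : E4 × E4, z.2 - c ≠ 0 := Measure.quasiMeasurePreserving_snd.ae h0
  filter_upwards [h1, h2] with z a b using ⟨a, b⟩

lemma feyn_norm (e : E4) (he : ‖e‖ = 1) (x : E4) (s : ℝ) :
    (1 - s) * ‖x‖ ^ 2 + s * ‖x - e‖ ^ 2 = ‖x - s • e‖ ^ 2 + s * (1 - s) := by
  rw [norm_sub_sq_real, norm_sub_sq_real, norm_smul, inner_smul_right, he, mul_pow,
    Real.norm_eq_abs, sq_abs]
  ring

lemma lint_feyn_norm (e : E4) (he : ‖e‖ = 1) (x : E4) (h0 : x - 0 ≠ 0) (h1 : x - e ≠ 0) :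
    ∫⁻ s, ENNReal.ofReal (1 / (‖x - s • e‖ ^ 2 + s * (1 - s)) ^ 2) ∂muU =
      ENNReal.ofReal (1 / (‖x‖ ^ 2 * ‖x - e‖ ^ 2)) := by
  rw [sub_zero] at h0
  have := norm_pos_iff.2 h0
  have := norm_pos_iff.2 h1
  rw [← lint_feyn _ _ (by positivity) (by positivity)]
  simp_rw [feyn_norm e he]

/-- The reduced integrand on the unit cube. -/
noncomputable def redI (ξ η l u : ℝ) : ENNReal :=
  ENNReal.ofReal (1 / ((1 - l) * (ξ * (1 - ξ)) + l * (η * (1 - η)) + u * (l * (1 - l)) * (ξ - η) ^ 2))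

lemma stage1 (e : E4) (he : ‖e‖ = 1) :
    ∫⁻ x : E4 × E4, ENNReal.ofReal (1 / (‖x.1‖ ^ 2 * ‖x.1 - x.2‖ ^ 2 * ‖x.2‖ ^ 2 *
      ‖x.1 - e‖ ^ 2 * ‖x.2 - e‖ ^ 2)) =
    ENNReal.ofReal (Real.pi ^ 4) * ∫⁻ ξ, ∫⁻ η, ∫⁻ l, ∫⁻ u, redI ξ η l u ∂muU ∂muU ∂muU ∂muU := by
  let H : E4 × E4 → ℝ × ℝ → ENNReal := fun z w =>
    ENNReal.ofReal (1 / (‖z.2 - w.1 • e‖ ^ 2 + w.1 * (1 - w.1)) ^ 2) *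
      (ENNReal.ofReal (1 / (‖z.1 - w.2 • e‖ ^ 2 + w.2 * (1 - w.2)) ^ 2) *
        ENNReal.ofReal (1 / ‖z.2 - z.1‖ ^ 2))
  have hH : Measurable (Function.uncurry H) := by
    unfold H Function.uncurry
    fun_prop
  calc _ = ∫⁻ z, ∫⁻ w, H z w ∂(muU.prod muU) := by
        refine lintegral_congr_ae ?_
        filter_upwards [ae_pt 0, ae_pt e] with z h0 h1
        unfold H
        rw [lintegral_prod_mul
          (f := fun s : ℝ => ENNReal.ofReal (1 / (‖z.2 - s • e‖ ^ 2 + s * (1 - s)) ^ 2))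
          (g := fun s : ℝ => ENNReal.ofReal (1 / (‖z.1 - s • e‖ ^ 2 + s * (1 - s)) ^ 2) *
            ENNReal.ofReal (1 / ‖z.2 - z.1‖ ^ 2)) (by fun_prop) (by fun_prop),
          lintegral_mul_const' _ _ ENNReal.ofReal_ne_top,
          lint_feyn_norm e he _ h0.1 h1.1, lint_feyn_norm e he _ h0.2 h1.2,
          ← ENNReal.ofReal_mul (by positivity), ← ENNReal.ofReal_mul (by positivity),
          norm_sub_rev z.2 z.1]
        congr 1
        rw [one_div_mul_one_div, one_div_mul_one_div]
        congr 1
        ring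
    _ = ∫⁻ w, ∫⁻ z, H z w ∂volume ∂(muU.prod muU) :=
        lintegral_lintegral_swap hH.aemeasurable
    _ = ∫⁻ ξ, ∫⁻ η, ∫⁻ z, H z (ξ, η) ∂volume ∂muU ∂muU := by
        rw [lintegral_prod]
        exact (hH.lintegral_prod_left' ).aemeasurable
    _ = _ := by
        rw [← lintegral_const_mul' _ _ ENNReal.ofReal_ne_top]
        refine setLIntegral_congr_fun measurableSet_Ioo fun ξ hξ => ?_
        rw [← lintegral_const_mul' _ _ ENNReal.ofReal_ne_top]
        refine setLIntegral_congr_fun measurableSet_Ioo fun η hη => ?_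
        unfold H redI
        have h1 : 0 < 1 - ξ := by linarith [hξ.2]
        have h2 : 0 < 1 - η := by linarith [hη.2]
        have h3 := hξ.1
        have h4 := hη.1
        rw [stage2 _ _ _ _ (by positivity) (by positivity), ← sub_smul, norm_smul, he, mul_one,
          Real.norm_eq_abs, sq_abs]

lemma meas_lint {α : Type*} [MeasurableSpace α] {f : α → ℝ → ENNReal} {μ : Measure ℝ} [SFinite μ]
    (hf : Measurable (Function.uncurry f)) : Measurable fun a => ∫⁻ u, f a u ∂μ :=
  hf.lintegral_prod_right'

/-- Integrand after the substitution to the barycentre variable. -/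
noncomputable def redG (x m y u : ℝ) : ENNReal :=
  ENNReal.ofReal (1 / ((x - y) * (m * (1 - m) - (1 - u) * ((x - m) * (m - y)))))

lemma redI_to_redG (x y : ℝ) (hxy : y < x) :
    ∫⁻ l, ∫⁻ u, redI x y l u ∂muU ∂muU = ∫⁻ m in Ioo y x, ∫⁻ u, redG x m y u ∂muU := by
  rw [lint_affine' y x hxy]
  refine lintegral_congr fun l => ?_
  rw [← lintegral_const_mul' _ _ ENNReal.ofReal_ne_top]
  refine lintegral_congr fun u => ?_
  unfold redI redG
  have h : 0 < x - y := by linarith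
  rw [← ENNReal.ofReal_mul h.le]
  congr 1
  rw [← div_div, mul_div_assoc', mul_one_div, div_self h.ne']
  congr 1
  ring

lemma redG_sub (m t s u : ℝ) (hm : m ∈ Ioo (0:ℝ) 1) :
    ENNReal.ofReal (1 - m) * (ENNReal.ofReal (m - 0) *
      redG (m + (1 - m) * t) m (m - (m - 0) * s) u) =
    ENNReal.ofReal (1 / ((m * s + (1 - m) * t) * (1 - (1 - u) * (s * t)))) := by
  have h0 := hm.1
  have h1 : 0 < 1 - m := by linarith [hm.2]
  unfold redG
  rw [← ENNReal.ofReal_mul (by linarith), ← ENNReal.ofReal_mul h1.le]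
  congr 1
  have e : (m + (1 - m) * t - (m - (m - 0) * s)) * (m * (1 - m) - (1 - u) *
      ((m + (1 - m) * t - m) * (m - (m - (m - 0) * s)))) =
      ((1 - m) * m) * ((m * s + (1 - m) * t) * (1 - (1 - u) * (s * t))) := by ring
  rw [e, ← div_div, sub_zero, ← mul_assoc, mul_div_assoc', mul_div_assoc', mul_one,
    div_self (by positivity)]

/-- Integrand after the second substitution. -/
noncomputable def redJ (m t s u : ℝ) : ENNReal :=
  ENNReal.ofReal (1 / ((m * s + (1 - m) * t) * (1 - u * (s * t))))

lemma stage3 : ∫⁻ ξ, ∫⁻ η, ∫⁻ l, ∫⁻ u, redI ξ η l u ∂muU ∂muU ∂muU ∂muU =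
    2 * ∫⁻ m, ∫⁻ t, ∫⁻ s, ∫⁻ u, redJ m t s u ∂muU ∂muU ∂muU ∂muU := by
  rw [lint_sym]
  · congr 1
    calc _ = ∫⁻ x in Ioo (0:ℝ) 1, ∫⁻ y in Ioo 0 x, ∫⁻ m in Ioo y x, ∫⁻ u, redG x m y u ∂muU := by
          refine setLIntegral_congr_fun measurableSet_Ioo fun x hx => ?_
          refine setLIntegral_congr_fun measurableSet_Ioo fun y hy => ?_
          exact redI_to_redG x y hy.2
      _ = ∫⁻ x in Ioo (0:ℝ) 1, ∫⁻ m in Ioo 0 x, ∫⁻ y in Ioo 0 m, ∫⁻ u, redG x m y u ∂muU := by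
          refine setLIntegral_congr_fun measurableSet_Ioo fun x hx => ?_
          refine lint_triangle x (fun y m => ∫⁻ u, redG x m y u ∂muU) ?_
          unfold Function.uncurry redG
          apply meas_lint
          unfold Function.uncurry
          fun_prop
      _ = ∫⁻ x in Ioo (0:ℝ) 1, ∫⁻ m in Ioo 0 x, ∫⁻ s, ENNReal.ofReal (m - 0) *
            ∫⁻ u, redG x m (m - (m - 0) * s) u ∂muU ∂muU := by
          refine setLIntegral_congr_fun measurableSet_Ioo fun x hx => ?_
          refine setLIntegral_congr_fun measurableSet_Ioo fun m hm => ?_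
          exact lint_affine' 0 m hm.1 _
      _ = ∫⁻ m in Ioo (0:ℝ) 1, ∫⁻ x in Ioo m 1, ∫⁻ s, ENNReal.ofReal (m - 0) *
            ∫⁻ u, redG x m (m - (m - 0) * s) u ∂muU ∂muU := by
          symm
          refine lint_triangle 1 (fun m x => ∫⁻ s, ENNReal.ofReal (m - 0) *
            ∫⁻ u, redG x m (m - (m - 0) * s) u ∂muU ∂muU) ?_
          unfold Function.uncurry redG
          apply meas_lint
          unfold Function.uncurry
          apply Measurable.mul (by fun_prop)
          apply meas_lint
          unfold Function.uncurry
          fun_prop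
      _ = _ := by
          refine setLIntegral_congr_fun measurableSet_Ioo fun m hm => ?_
          rw [lint_affine m 1 hm.2]
          refine lintegral_congr fun t => ?_
          rw [← lintegral_const_mul' _ _ ENNReal.ofReal_ne_top]
          refine lintegral_congr fun s => ?_
          rw [← lintegral_const_mul' _ _ ENNReal.ofReal_ne_top,
            ← lintegral_const_mul' _ _ ENNReal.ofReal_ne_top, lint_reflect]
          refine lintegral_congr fun u => ?_
          rw [redG_sub m t s _ hm, redJ]
          congr 5
          ring
  · unfold Function.uncurry redI
    apply meas_lint
    unfold Function.uncurry
    apply meas_lint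
    unfold Function.uncurry
    fun_prop
  · intro x _ y _
    rw [lint_reflect]
    refine lintegral_congr fun l => lintegral_congr fun u => ?_
    unfold redI
    congr 2
    ring

lemma stage4 : ∫⁻ m, ∫⁻ t, ∫⁻ s, ∫⁻ u, redJ m t s u ∂muU ∂muU ∂muU ∂muU =
    2 * ∫⁻ t, ∫⁻ w, ∫⁻ m, ∫⁻ u, ENNReal.ofReal (1 / (1 - (1 - w) * m)) *
      ENNReal.ofReal (1 / (1 - u * (t ^ 2 * w))) ∂muU ∂muU ∂muU ∂muU := by
  have h1 : ∫⁻ m, ∫⁻ t, ∫⁻ s, ∫⁻ u, redJ m t s u ∂muU ∂muU ∂muU ∂muU =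
      ∫⁻ t, ∫⁻ s, ∫⁻ m, ∫⁻ u, redJ m t s u ∂muU ∂muU ∂muU ∂muU := by
    rw [lintegral_lintegral_swap]
    · refine lintegral_congr fun t => ?_
      rw [lintegral_lintegral_swap]
      apply Measurable.aemeasurable
      unfold Function.uncurry redJ
      apply meas_lint
      unfold Function.uncurry
      fun_prop
    · apply Measurable.aemeasurable
      unfold Function.uncurry redJ
      apply meas_lint
      unfold Function.uncurry
      apply meas_lint
      unfold Function.uncurry
      fun_prop
  rw [h1, lint_sym]
  · congr 1
    refine setLIntegral_congr_fun measurableSet_Ioo fun t ht => ?_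
    have ht0 := ht.1
    rw [lint_affine 0 t ht.1]
    refine setLIntegral_congr_fun measurableSet_Ioo fun w hw => ?_
    rw [← lintegral_const_mul' _ _ ENNReal.ofReal_ne_top]
    refine setLIntegral_congr_fun measurableSet_Ioo fun m hm => ?_
    rw [← lintegral_const_mul' _ _ ENNReal.ofReal_ne_top]
    refine lintegral_congr fun u => ?_
    have h3 : 0 < 1 - (1 - w) * m := by nlinarith [hm.1, hm.2, hw.1, hw.2]
    rw [redJ, ← ENNReal.ofReal_mul (by linarith), ← ENNReal.ofReal_mul (by positivity)]
    congr 1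
    have e : (m * (0 + (t - 0) * w) + (1 - m) * t) * (1 - u * ((0 + (t - 0) * w) * t)) =
      t * ((1 - (1 - w) * m) * (1 - u * (t ^ 2 * w))) := by ring
    rw [e, one_div_mul_one_div, ← div_div, sub_zero, mul_div_assoc', mul_div_assoc', mul_one,
      div_self ht0.ne']
  · unfold Function.uncurry redJ
    apply meas_lint
    unfold Function.uncurry
    apply meas_lint
    unfold Function.uncurry
    fun_prop
  · intro x _ y _
    rw [lint_reflect]
    refine lintegral_congr fun l => lintegral_congr fun u => ?_
    unfold redJ
    congr 2
    ring

lemma ofReal_geom (r : ℝ) (h0 : 0 ≤ r) (h1 : r < 1) :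
    ENNReal.ofReal (1 / (1 - r)) = ∑' k : ℕ, ENNReal.ofReal (r ^ k) := by
  rw [← ENNReal.ofReal_tsum_of_nonneg (fun n => by positivity) (summable_geometric_of_lt_one h0 h1),
    tsum_geometric_of_lt_one h0 h1, one_div]

/-- `N(w) = -log w` as an integral. -/
noncomputable def logN (w : ℝ) : ENNReal := ∫⁻ x in Ioo w 1, ENNReal.ofReal (1 / x)

lemma logN_meas : Measurable logN := by
  have : Measurable fun w : ℝ => ∫⁻ x, ({z : ℝ × ℝ | z.1 < z.2 ∧ z.2 < 1}).indicator
      (fun z => ENNReal.ofReal (1 / z.2)) (w, x) := by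
    apply Measurable.lintegral_prod_right'
    apply Measurable.indicator (by fun_prop)
    exact MeasurableSet.inter (measurableSet_lt measurable_fst measurable_snd)
      (measurableSet_lt measurable_snd measurable_const)
  convert this using 1
  ext w
  rw [logN, ← lintegral_indicator measurableSet_Ioo]
  rfl

lemma lint_pow_logN (n : ℕ) :
    ∫⁻ w, ENNReal.ofReal (w ^ n) * logN w ∂muU = ENNReal.ofReal (1 / ((n:ℝ) + 1) ^ 2) := by
  calc _ = ∫⁻ w in Ioo (0:ℝ) 1, ∫⁻ x in Ioo w 1, ENNReal.ofReal (w ^ n) * ENNReal.ofReal (1 / x) := by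
        refine lintegral_congr fun w => ?_
        rw [logN, lintegral_const_mul' _ _ ENNReal.ofReal_ne_top]
    _ = ∫⁻ x in Ioo (0:ℝ) 1, ∫⁻ w in Ioo 0 x, ENNReal.ofReal (w ^ n) * ENNReal.ofReal (1 / x) := by
        apply lint_triangle
        unfold Function.uncurry
        fun_prop
    _ = ∫⁻ x in Ioo (0:ℝ) 1, ENNReal.ofReal (x ^ n) * ENNReal.ofReal (1 / ((n:ℝ) + 1)) := by
        refine setLIntegral_congr_fun measurableSet_Ioo fun x hx => ?_
        have := hx.1
        rw [lintegral_mul_const' _ _ ENNReal.ofReal_ne_top, lint_pow n x hx.1.le,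
          ← ENNReal.ofReal_mul (by positivity), ← ENNReal.ofReal_mul (by positivity)]
        congr 1
        field_simp
        ring
    _ = _ := by
        rw [lintegral_mul_const' _ _ ENNReal.ofReal_ne_top, lint_pow n 1 zero_le_one,
          ← ENNReal.ofReal_mul (by positivity)]
        congr 1
        field_simp
        simp

lemma lint_m (w : ℝ) (hw : w ∈ Ioo (0:ℝ) 1) :
    ∫⁻ m, ENNReal.ofReal (1 / (1 - (1 - w) * m)) ∂muU = ∑' l : ℕ, ENNReal.ofReal (w ^ l) * logN w := by
  rw [ENNReal.tsum_mul_right, ← ofReal_geom w hw.1.le hw.2, logN, lint_affine' w 1 hw.2,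
    ← lintegral_const_mul' _ _ ENNReal.ofReal_ne_top]
  refine lintegral_congr fun m => ?_
  have : 0 < 1 - w := by linarith [hw.2]
  rw [← mul_assoc, ← ENNReal.ofReal_mul (by positivity), one_div_mul_cancel this.ne']
  simp

lemma lint_u (t w : ℝ) (ht : t ∈ Ioo (0:ℝ) 1) (hw : w ∈ Ioo (0:ℝ) 1) :
    ∫⁻ u, ENNReal.ofReal (1 / (1 - u * (t ^ 2 * w))) ∂muU =
      ∑' k : ℕ, ENNReal.ofReal (t ^ (2 * k)) * (ENNReal.ofReal (1 / ((k:ℝ) + 1)) * ENNReal.ofReal (w ^ k)) := by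
  have ht0 := ht.1
  have hw0 := hw.1
  have h1 : t ^ 2 * w < 1 := by
    have : t ^ 2 < 1 := by nlinarith [ht.2]
    nlinarith [hw.2]
  calc _ = ∫⁻ u, ∑' k : ℕ, ENNReal.ofReal (u ^ k) * ENNReal.ofReal ((t ^ 2 * w) ^ k) ∂muU := by
        refine setLIntegral_congr_fun measurableSet_Ioo fun u hu => ?_
        have hu0 := hu.1
        have : 0 < t ^ 2 * w := by positivity
        rw [ofReal_geom _ (by positivity) (by nlinarith [hu.2])]
        refine tsum_congr fun k => ?_
        rw [mul_pow, ENNReal.ofReal_mul (by positivity)]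
    _ = _ := by
        rw [lintegral_tsum (fun k => by fun_prop)]
        refine tsum_congr fun k => ?_
        rw [lintegral_mul_const' _ _ ENNReal.ofReal_ne_top, lint_pow k 1 zero_le_one, mul_pow,
          ENNReal.ofReal_mul (by positivity), one_pow, ← pow_mul]
        ring

lemma stage5 : ∫⁻ t, ∫⁻ w, ∫⁻ m, ∫⁻ u, ENNReal.ofReal (1 / (1 - (1 - w) * m)) *
      ENNReal.ofReal (1 / (1 - u * (t ^ 2 * w))) ∂muU ∂muU ∂muU ∂muU =
    ∑' (k : ℕ) (l : ℕ), ENNReal.ofReal (1 / (((k:ℝ) + 1) * (2 * k + 1) * (k + l + 1) ^ 2)) := by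
  calc _ = ∫⁻ t, ∫⁻ w, ∑' (k : ℕ) (l : ℕ), ENNReal.ofReal (t ^ (2 * k)) *
        (ENNReal.ofReal (1 / ((k:ℝ) + 1)) * (ENNReal.ofReal (w ^ (k + l)) * logN w)) ∂muU ∂muU := by
        refine setLIntegral_congr_fun measurableSet_Ioo fun t ht => ?_
        refine setLIntegral_congr_fun measurableSet_Ioo fun w hw => ?_
        have hw0 := hw.1
        simp_rw [lintegral_const_mul' _ _ ENNReal.ofReal_ne_top]
        have hm : Measurable fun m : ℝ => ENNReal.ofReal (1 / (1 - (1 - w) * m)) := by fun_prop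
        rw [lintegral_mul_const _ hm, lint_m w hw, lint_u t w ht hw, ← ENNReal.tsum_mul_left]
        refine tsum_congr fun k => ?_
        rw [← ENNReal.tsum_mul_right]
        refine tsum_congr fun l => ?_
        rw [pow_add, ENNReal.ofReal_mul (by positivity)]
        ring
    _ = ∫⁻ t, ∑' (k : ℕ) (l : ℕ), ENNReal.ofReal (t ^ (2 * k)) *
        (ENNReal.ofReal (1 / ((k:ℝ) + 1)) * ENNReal.ofReal (1 / (((k + l : ℕ):ℝ) + 1) ^ 2)) ∂muU := by
        refine lintegral_congr fun t => ?_
        have := logN_meas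
        rw [lintegral_tsum (fun k => by fun_prop)]
        refine tsum_congr fun k => ?_
        rw [lintegral_tsum (fun k => by fun_prop)]
        refine tsum_congr fun l => ?_
        rw [lintegral_const_mul' _ _ ENNReal.ofReal_ne_top,
          lintegral_const_mul' _ _ ENNReal.ofReal_ne_top, lint_pow_logN]
    _ = _ := by
        rw [lintegral_tsum (fun k => by fun_prop)]
        refine tsum_congr fun k => ?_
        rw [lintegral_tsum (fun k => by fun_prop)]
        refine tsum_congr fun l => ?_
        rw [lintegral_mul_const _ (by fun_prop), lint_pow _ 1 zero_le_one,
          ← ENNReal.ofReal_mul (by positivity), ← ENNReal.ofReal_mul (by positivity)]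
        congr 1
        push_cast
        rw [one_pow]
        field_simp

lemma tsum_tri (f : ℕ → ℕ → ENNReal) :
    ∑' j : ℕ, ∑ i ∈ Finset.range j, f i j = ∑' (i : ℕ) (l : ℕ), f i (i + l + 1) := by
  rw [tsum_eq_zero_add' ENNReal.summable, ← ENNReal.tsum_prod,
    ← (Finset.HasAntidiagonal.sigmaAntidiagonalEquivProd (A := ℕ)).tsum_eq (_ : ℕ × ℕ → ENNReal), ENNReal.tsum_sigma']
  simp only [Finset.range_zero, Finset.sum_empty, zero_add]
  refine tsum_congr fun n => ?_
  rw [tsum_fintype]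
  have h := Finset.Nat.sum_antidiagonal_eq_sum_range_succ (fun i l => f i (i + l + 1)) n
  have h2 := Finset.sum_coe_sort (Finset.HasAntidiagonal.antidiagonal n) (fun x : ℕ × ℕ => f x.1 (x.1 + x.2 + 1))
  refine Eq.trans ?_ (h2.trans h).symm
  refine Finset.sum_congr rfl fun i hi => ?_
  have : i ≤ n := Nat.lt_succ_iff.1 (Finset.mem_range.1 hi)
  congr 1
  omega

lemma hasSum_tel1 (n : ℕ) :
    HasSum (fun i : ℕ => 1 / ((i:ℝ) + n + 1) - 1 / ((i:ℝ) + n + 2)) (1 / ((n:ℝ) + 1)) := by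
  rw [hasSum_iff_tendsto_nat_of_nonneg]
  · have h : ∀ N : ℕ, ∑ i ∈ Finset.range N, (1 / ((i:ℝ) + n + 1) - 1 / ((i:ℝ) + n + 2))
        = 1 / ((n:ℝ) + 1) - 1 / ((N:ℝ) + n + 1) := by
      intro N
      have := Finset.sum_range_sub' (fun i : ℕ => 1 / ((i:ℝ) + n + 1)) N
      simp only [Nat.cast_zero, zero_add] at this
      rw [← this]
      refine Finset.sum_congr rfl fun i _ => ?_
      push_cast
      congr 2
      ring
    simp_rw [h]
    have h0 : Filter.Tendsto (fun N : ℕ => 1 / ((N:ℝ) + n + 1)) Filter.atTop (nhds 0) := by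
      have := (tendsto_one_div_add_atTop_nhds_zero_nat (𝕜 := ℝ)).comp (Filter.tendsto_add_atTop_nat n)
      refine this.congr fun N => ?_
      simp
    simpa using h0.const_sub (1 / ((n:ℝ) + 1))
  · intro i
    rw [sub_nonneg]
    apply one_div_le_one_div_of_le <;> [positivity; linarith]

lemma hasSum_tel (n : ℕ) :
    HasSum (fun i : ℕ => 1 / ((i:ℝ) + 1) - 1 / ((i:ℝ) + n + 1))
      (∑ i ∈ Finset.range n, 1 / ((i:ℝ) + 1)) := by
  induction n with
  | zero => simp
  | succ n ih =>
    rw [Finset.sum_range_succ]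
    convert ih.add (hasSum_tel1 n) using 1
    ext i
    push_cast
    ring_nf

lemma tsum_harm (n : ℕ) (hn : 0 < n) :
    ∑' i : ℕ, ENNReal.ofReal (1 / (((i:ℝ) + 1) * n * (i + n + 1))) =
      ∑ i ∈ Finset.range n, ENNReal.ofReal (1 / (((i:ℝ) + 1) * n ^ 2)) := by
  have hn' : (0:ℝ) < n := by exact_mod_cast hn
  have h := (hasSum_tel n).mul_right (1 / (n:ℝ) ^ 2)
  have e : ∀ i : ℕ, (1 / ((i:ℝ) + 1) - 1 / ((i:ℝ) + n + 1)) * (1 / (n:ℝ) ^ 2)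
      = 1 / (((i:ℝ) + 1) * n * (i + n + 1)) := by
    intro i
    field_simp
    ring
  simp_rw [e] at h
  rw [← ENNReal.ofReal_tsum_of_nonneg (fun i => by positivity) h.summable, h.tsum_eq,
    ← ENNReal.ofReal_sum_of_nonneg (fun i _ => by positivity), Finset.sum_mul]
  congr 1
  refine Finset.sum_congr rfl fun i _ => ?_
  rw [one_div_mul_one_div]

/-- `ζ(3)` in `ENNReal`. -/
noncomputable def Z3 : ENNReal := ∑' n : ℕ, ENNReal.ofReal (1 / ((n:ℝ) + 1) ^ 3)
/-- Euler's double sum. -/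
noncomputable def sE : ENNReal := ∑' (i : ℕ) (l : ℕ), ENNReal.ofReal (1 / (((i:ℝ) + 1) * (i + l + 2) ^ 2))

lemma summable_sq : Summable fun n : ℕ => 1 / ((n:ℝ) + 1) ^ 2 := by
  have := (summable_nat_add_iff 1).2 (Real.summable_one_div_nat_pow.2 (by norm_num : 1 < 2))
  simpa using this

lemma summable_cube : Summable fun n : ℕ => 1 / ((n:ℝ) + 1) ^ 3 := by
  have := (summable_nat_add_iff 1).2 (Real.summable_one_div_nat_pow.2 (by norm_num : 1 < 3))
  simpa using this

lemma Z3_eq : Z3 = ENNReal.ofReal (∑' n : ℕ, 1 / ((n:ℝ) + 1) ^ 3) := by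
  rw [Z3, ENNReal.ofReal_tsum_of_nonneg (fun i => by positivity) summable_cube]

lemma Z3_ne_top : Z3 ≠ ⊤ := by rw [Z3_eq]; exact ENNReal.ofReal_ne_top

lemma sE_ne_top : sE ≠ ⊤ := by
  have h : sE ≤ ∑' n : ℕ, ENNReal.ofReal (1 / ((n:ℝ) + 1) ^ 2) := by
    refine ENNReal.tsum_le_tsum fun i => ?_
    have h1 := (hasSum_tel1 i).mul_right (1 / ((i:ℝ) + 1))
    have : 1 / ((i:ℝ) + 1) ^ 2 = ∑' l : ℕ, (1 / ((l:ℝ) + i + 1) - 1 / ((l:ℝ) + i + 2)) * (1 / ((i:ℝ) + 1)) := by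
      rw [h1.tsum_eq]; field_simp
    have h2 : ∀ l : ℕ, 1 / (((i:ℝ) + 1) * (i + l + 2) ^ 2) ≤
        (1 / ((l:ℝ) + i + 1) - 1 / ((l:ℝ) + i + 2)) * (1 / ((i:ℝ) + 1)) := by
      intro l
      have : (1 / ((l:ℝ) + i + 1) - 1 / ((l:ℝ) + i + 2)) * (1 / ((i:ℝ) + 1)) =
        1 / (((i:ℝ) + 1) * ((l + i + 1) * (l + i + 2))) := by
        field_simp; ring
      rw [this]
      apply one_div_le_one_div_of_le (by positivity)
      apply mul_le_mul_of_nonneg_left _ (by positivity)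
      nlinarith [(Nat.cast_nonneg i : (0:ℝ) ≤ i), (Nat.cast_nonneg l : (0:ℝ) ≤ l)]
    rw [this, ENNReal.ofReal_tsum_of_nonneg (fun l => le_trans (by positivity) (h2 l)) h1.summable]
    exact ENNReal.tsum_le_tsum fun l => ENNReal.ofReal_le_ofReal (h2 l)
  refine ne_top_of_le_ne_top ?_ h
  rw [← ENNReal.ofReal_tsum_of_nonneg (fun i => by positivity) summable_sq]
  exact ENNReal.ofReal_ne_top

lemma sE_eq : sE = Z3 := by
  have h1 : ∑' (i : ℕ) (j : ℕ), ENNReal.ofReal (1 / (((i:ℝ) + 1) * (j + 1) * (i + j + 2))) = sE + sE := by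
    have : ∀ i j : ℕ, ENNReal.ofReal (1 / (((i:ℝ) + 1) * (j + 1) * (i + j + 2))) =
        ENNReal.ofReal (1 / (((i:ℝ) + 1) * (i + j + 2) ^ 2)) +
          ENNReal.ofReal (1 / (((j:ℝ) + 1) * (j + i + 2) ^ 2)) := by
      intro i j
      rw [← ENNReal.ofReal_add (by positivity) (by positivity), add_comm (j:ℝ) i]
      congr 1
      field_simp
      ring
    simp_rw [this, ENNReal.tsum_add]
    rw [ENNReal.tsum_comm (f := fun i j : ℕ => ENNReal.ofReal (1 / (((j:ℝ) + 1) * (j + i + 2) ^ 2)))]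
    rfl
  have h2 : ∑' (i : ℕ) (j : ℕ), ENNReal.ofReal (1 / (((i:ℝ) + 1) * (j + 1) * (i + j + 2))) = sE + Z3 := by
    rw [ENNReal.tsum_comm]
    have : ∀ j : ℕ, ∑' i : ℕ, ENNReal.ofReal (1 / (((i:ℝ) + 1) * (j + 1) * (i + j + 2))) =
        ∑ i ∈ Finset.range j, ENNReal.ofReal (1 / (((i:ℝ) + 1) * (j + 1) ^ 2)) +
          ENNReal.ofReal (1 / ((j:ℝ) + 1) ^ 3) := by
      intro j
      have h := tsum_harm (j + 1) (Nat.succ_pos j)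
      rw [Finset.sum_range_succ] at h
      push_cast at h
      convert h using 6 with i
      · ring
      · ring
    simp_rw [this, ENNReal.tsum_add]
    rw [tsum_tri (fun i j => ENNReal.ofReal (1 / (((i:ℝ) + 1) * (j + 1) ^ 2)))]
    unfold sE Z3
    congr 5
    ext i
    congr 1
    ext l
    push_cast
    congr 4
    ring
  exact (ENNReal.add_right_inj sE_ne_top).1 (h1.symm.trans h2)

/-- odd part of `ζ(3)` -/
noncomputable def sL : ENNReal := ∑' l : ℕ, ENNReal.ofReal (1 / (2 * (l:ℝ) + 1) ^ 3)

lemma sL_eq : 8 * sL + Z3 = 8 * Z3 := by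
  have h : Z3 = sL + ∑' l : ℕ, ENNReal.ofReal (1 / (2 * (l:ℝ) + 2) ^ 3) := by
    rw [Z3, ← tsum_even_add_odd ENNReal.summable ENNReal.summable]
    unfold sL
    push_cast
    congr 6
    ext l
    congr 3
    ring
  have h2 : 8 * ∑' l : ℕ, ENNReal.ofReal (1 / (2 * (l:ℝ) + 2) ^ 3) = Z3 := by
    rw [Z3, ← ENNReal.tsum_mul_left]
    refine tsum_congr fun l => ?_
    rw [show (8 : ENNReal) = ENNReal.ofReal 8 by simp, ← ENNReal.ofReal_mul (by norm_num)]
    congr 1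
    field_simp
    ring
  conv_rhs => rw [h, mul_add, h2]

noncomputable def sOa : ENNReal :=
  ∑' (i : ℕ) (l : ℕ), ENNReal.ofReal (1 / ((2 * (i:ℝ) + 1) * (2 * i + 2 * l + 3) ^ 2))
noncomputable def sOb : ENNReal :=
  ∑' (i : ℕ) (l : ℕ), ENNReal.ofReal (1 / ((2 * (i:ℝ) + 2) * (2 * i + 2 * l + 3) ^ 2))
noncomputable def sEo : ENNReal :=
  ∑' (i : ℕ) (l : ℕ), ENNReal.ofReal (1 / ((2 * (i:ℝ) + 1) * (2 * i + 2 * l + 2) ^ 2))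

lemma sOa_ne_top : sOa ≠ ⊤ := by
  refine ne_top_of_le_ne_top sE_ne_top ?_
  refine ENNReal.tsum_le_tsum fun i => ENNReal.tsum_le_tsum fun l => ENNReal.ofReal_le_ofReal ?_
  have := (Nat.cast_nonneg i : (0:ℝ) ≤ i)
  have := (Nat.cast_nonneg l : (0:ℝ) ≤ l)
  apply one_div_le_one_div_of_le (by positivity)
  gcongr <;> linarith

lemma sOb_ne_top : sOb ≠ ⊤ := by
  refine ne_top_of_le_ne_top sE_ne_top ?_
  refine ENNReal.tsum_le_tsum fun i => ENNReal.tsum_le_tsum fun l => ENNReal.ofReal_le_ofReal ?_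
  have := (Nat.cast_nonneg i : (0:ℝ) ≤ i)
  have := (Nat.cast_nonneg l : (0:ℝ) ≤ l)
  apply one_div_le_one_div_of_le (by positivity)
  gcongr <;> linarith

lemma sum_range_two_mul (f : ℕ → ENNReal) (n : ℕ) :
    ∑ i ∈ Finset.range (2 * n), f i =
      ∑ i ∈ Finset.range n, f (2 * i) + ∑ i ∈ Finset.range n, f (2 * i + 1) := by
  induction n with
  | zero => simp
  | succ n ih =>
    rw [show 2 * (n + 1) = 2 * n + 1 + 1 by ring, Finset.sum_range_succ, Finset.sum_range_succ, ih,
      Finset.sum_range_succ, Finset.sum_range_succ]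
    ring

lemma sEo_eq : 2 * sEo = sL := by
  -- the sum over `i` all, `j` odd of `1 / (i j (i + j))`
  have h1 : ∑' (l : ℕ) (i : ℕ), ENNReal.ofReal (1 / (((i:ℝ) + 1) * (2 * l + 1) * (i + (2 * l + 1) + 1))) =
      2 * sEo + (sOa + sOb) := by
    have hs : ∀ l : ℕ, ∑' (i : ℕ), ENNReal.ofReal (1 / (((i:ℝ) + 1) * (2 * l + 1) * (i + (2 * l + 1) + 1))) =
      ∑' i : ℕ, (ENNReal.ofReal (1 / ((2 * (i:ℝ) + 1) * (2 * i + 2 * l + 2) ^ 2)) +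
        ENNReal.ofReal (1 / ((2 * (l:ℝ) + 1) * (2 * l + 2 * i + 2) ^ 2))) +
      ∑' i : ℕ, (ENNReal.ofReal (1 / ((2 * (l:ℝ) + 1) * (2 * l + 2 * i + 3) ^ 2)) +
        ENNReal.ofReal (1 / ((2 * (i:ℝ) + 2) * (2 * i + 2 * l + 3) ^ 2))) := by
      intro l
      rw [← tsum_even_add_odd ENNReal.summable ENNReal.summable]
      congr 1
      · refine tsum_congr fun i => ?_
        rw [← ENNReal.ofReal_add (by positivity) (by positivity)]
        congr 1
        push_cast
        rw [show (2 * (l:ℝ) + 2 * i + 2) = 2 * i + 2 * l + 2 by ring]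
        field_simp
        ring
      · refine tsum_congr fun i => ?_
        rw [← ENNReal.ofReal_add (by positivity) (by positivity)]
        congr 1
        push_cast
        rw [show (2 * (l:ℝ) + 2 * i + 3) = 2 * i + 2 * l + 3 by ring,
          show (2 * (i:ℝ) + 1 + (2 * l + 1) + 1) = 2 * i + 2 * l + 3 by ring]
        field_simp
        ring
    simp_rw [hs, ENNReal.tsum_add]
    rw [ENNReal.tsum_comm (f := fun l i : ℕ => ENNReal.ofReal (1 / ((2 * (i:ℝ) + 1) * (2 * i + 2 * l + 2) ^ 2))),
      ENNReal.tsum_comm (f := fun l i : ℕ => ENNReal.ofReal (1 / ((2 * (i:ℝ) + 2) * (2 * i + 2 * l + 3) ^ 2))),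
      two_mul]
    rfl
  have h2 : ∑' (l : ℕ) (i : ℕ), ENNReal.ofReal (1 / (((i:ℝ) + 1) * (2 * l + 1) * (i + (2 * l + 1) + 1))) =
      sL + (sOa + sOb) := by
    have hs : ∀ l : ℕ, ∑' (i : ℕ), ENNReal.ofReal (1 / (((i:ℝ) + 1) * (2 * l + 1) * (i + (2 * l + 1) + 1))) =
      ∑ i ∈ Finset.range l, ENNReal.ofReal (1 / ((2 * (i:ℝ) + 1) * (2 * l + 1) ^ 2)) +
      ∑ i ∈ Finset.range l, ENNReal.ofReal (1 / ((2 * (i:ℝ) + 2) * (2 * l + 1) ^ 2)) +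
      ENNReal.ofReal (1 / (2 * (l:ℝ) + 1) ^ 3) := by
      intro l
      have h := tsum_harm (2 * l + 1) (Nat.succ_pos _)
      rw [Finset.sum_range_succ, sum_range_two_mul] at h
      push_cast at h
      rw [h]
      have e1 : ∀ x : ℕ, (2 * (x:ℝ) + 1 + 1) = 2 * x + 2 := fun x => by ring
      have e2 : (2 * (l:ℝ) + 1) * (2 * l + 1) ^ 2 = (2 * l + 1) ^ 3 := by ring
      simp_rw [e1, e2]
    simp_rw [hs, ENNReal.tsum_add]
    rw [tsum_tri (fun i l => ENNReal.ofReal (1 / ((2 * (i:ℝ) + 1) * (2 * l + 1) ^ 2))),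
      tsum_tri (fun i l => ENNReal.ofReal (1 / ((2 * (i:ℝ) + 2) * (2 * l + 1) ^ 2))), add_comm]
    congr 1
    unfold sOa sOb
    congr 1
    · refine tsum_congr fun i => tsum_congr fun l => ?_
      push_cast
      congr 4
      ring
    · refine tsum_congr fun i => tsum_congr fun l => ?_
      push_cast
      congr 4
      ring
  exact (ENNReal.add_left_inj (ENNReal.add_ne_top.2 ⟨sOa_ne_top, sOb_ne_top⟩)).1 (h1.symm.trans h2)

/-- The final double sum. -/
noncomputable def sX : ENNReal :=
  ∑' (k : ℕ) (l : ℕ), ENNReal.ofReal (1 / (((k:ℝ) + 1) * (2 * k + 1) * (k + l + 1) ^ 2))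

lemma sX_eq : 2 * sX = 3 * Z3 := by
  have hY : ∑' (k : ℕ) (l : ℕ), ENNReal.ofReal (1 / (((k:ℝ) + 1) * (k + l + 1) ^ 2)) = Z3 + sE := by
    have : ∀ k : ℕ, ∑' (l : ℕ), ENNReal.ofReal (1 / (((k:ℝ) + 1) * (k + l + 1) ^ 2)) =
        ENNReal.ofReal (1 / ((k:ℝ) + 1) ^ 3) +
        ∑' (l : ℕ), ENNReal.ofReal (1 / (((k:ℝ) + 1) * (k + l + 2) ^ 2)) := by
      intro k
      rw [tsum_eq_zero_add' ENNReal.summable]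
      congr 1
      · congr 1
        push_cast
        congr 1
        ring
      · refine tsum_congr fun l => ?_
        push_cast
        congr 4
        ring
    simp_rw [this, ENNReal.tsum_add]
    rfl
  have hZ : sX + ∑' (k : ℕ) (l : ℕ), ENNReal.ofReal (1 / (((k:ℝ) + 1) * (k + l + 1) ^ 2)) = 8 * sEo := by
    unfold sX sEo
    simp_rw [← ENNReal.tsum_add, ← ENNReal.tsum_mul_left]
    refine tsum_congr fun k => tsum_congr fun l => ?_
    rw [show (8 : ENNReal) = ENNReal.ofReal 8 by simp, ← ENNReal.ofReal_mul (by norm_num),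
      ← ENNReal.ofReal_add (by positivity) (by positivity)]
    congr 1
    field_simp
    ring
  rw [hY, sE_eq] at hZ
  have h8 : 2 * (sX + (Z3 + Z3)) + Z3 = 8 * Z3 := by
    rw [hZ, ← sL_eq, ← sEo_eq]
    ring
  have h9 : 2 * sX + 5 * Z3 = 3 * Z3 + 5 * Z3 := by
    rw [← add_mul]
    norm_num
    rw [← h8]
    ring
  exact (ENNReal.add_left_inj (ENNReal.mul_ne_top (by norm_num) Z3_ne_top)).1 h9

lemma total_lint (e : EuclideanSpace ℝ (Fin 4)) (he : ‖e‖ = 1) :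
    ∫⁻ x : EuclideanSpace ℝ (Fin 4) × EuclideanSpace ℝ (Fin 4),
      ENNReal.ofReal (1 / (‖x.1‖ ^ 2 * ‖x.1 - x.2‖ ^ 2 * ‖x.2‖ ^ 2 *
      ‖x.1 - e‖ ^ 2 * ‖x.2 - e‖ ^ 2)) =
    ENNReal.ofReal (Real.pi ^ 4 * (6 * ∑' n : ℕ, 1 / ((n:ℝ) + 1) ^ 3)) := by
  have h : (2:ENNReal) * (2 * sX) = 6 * Z3 := by
    rw [sX_eq, ← mul_assoc]
    norm_num
  have h5 := stage5
  change _ = sX at h5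
  refine (stage1 e he).trans ?_
  rw [stage3, stage4, h5, h, Z3_eq, show (6 : ENNReal) = ENNReal.ofReal 6 by simp,
    ← ENNReal.ofReal_mul (by norm_num), ← ENNReal.ofReal_mul (by positivity)]

lemma zeta_three_eq : riemannZeta 3 = ((∑' n : ℕ, 1 / ((n:ℝ) + 1) ^ 3 : ℝ) : ℂ) := by
  have h := zeta_eq_tsum_one_div_nat_add_one_cpow (s := 3) (by norm_num)
  rw [h, Complex.ofReal_tsum]
  refine tsum_congr fun n => ?_
  push_cast
  congr 1
  exact_mod_cast Complex.cpow_natCast ((n:ℂ) + 1) 3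

end PeriodHelpers

/-- The Feynman period `P₃` of the complete graph `K₄` (wheel with three
spokes) in four dimensions equals `6ζ(3)`. -/
theorem period_K4_eq_six_zeta_three
    (e : EuclideanSpace ℝ (Fin 4)) (he : ‖e‖ = 1) :
    Integrable (fun x : EuclideanSpace ℝ (Fin 4) × EuclideanSpace ℝ (Fin 4) =>
      1 / (‖x.1‖ ^ 2 * ‖x.1 - x.2‖ ^ 2 * ‖x.2‖ ^ 2 * ‖x.1 - e‖ ^ 2 * ‖x.2 - e‖ ^ 2)) ∧
    (((1 / Real.pi ^ 4) * ∫ x : EuclideanSpace ℝ (Fin 4) × EuclideanSpace ℝ (Fin 4),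
        1 / (‖x.1‖ ^ 2 * ‖x.1 - x.2‖ ^ 2 * ‖x.2‖ ^ 2 * ‖x.1 - e‖ ^ 2 * ‖x.2 - e‖ ^ 2) : ℝ) : ℂ)
      = 6 * riemannZeta 3 := by
  have hnn : ∀ x : EuclideanSpace ℝ (Fin 4) × EuclideanSpace ℝ (Fin 4),
      0 ≤ 1 / (‖x.1‖ ^ 2 * ‖x.1 - x.2‖ ^ 2 * ‖x.2‖ ^ 2 * ‖x.1 - e‖ ^ 2 * ‖x.2 - e‖ ^ 2) :=
    fun x => by positivity
  have hm : Measurable (fun x : EuclideanSpace ℝ (Fin 4) × EuclideanSpace ℝ (Fin 4) =>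
      1 / (‖x.1‖ ^ 2 * ‖x.1 - x.2‖ ^ 2 * ‖x.2‖ ^ 2 * ‖x.1 - e‖ ^ 2 * ‖x.2 - e‖ ^ 2)) := by
    fun_prop
  have hl := total_lint e he
  refine ⟨⟨hm.aestronglyMeasurable, ?_⟩, ?_⟩
  · rw [hasFiniteIntegral_iff_ofReal (Filter.Eventually.of_forall hnn), hl]
    exact ENNReal.ofReal_lt_top
  · rw [integral_eq_lintegral_of_nonneg_ae (Filter.Eventually.of_forall hnn)
      hm.aestronglyMeasurable, hl, ENNReal.toReal_ofReal, zeta_three_eq]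
    · have hpi : (Real.pi : ℂ) ≠ 0 := by exact_mod_cast Real.pi_ne_zero
      generalize (∑' n : ℕ, 1 / ((n:ℝ) + 1) ^ 3) = S
      push_cast
      field_simp
    · have : 0 ≤ ∑' n : ℕ, 1 / ((n:ℝ) + 1) ^ 3 := tsum_nonneg fun n => by positivity
      positivity
end

section
/- For every nonzero p ∈ ℝ⁴, the function (q₁, q₂) ↦ 1/(‖q₁‖²‖q₂‖²‖q₁ − q₂‖²‖p − q₁‖²‖p − q₂‖²) is Lebesgue integrable on ℝ⁴ × ℝ⁴ and (1/π⁴) ∫_{ℝ⁴×ℝ⁴} dq₁ dq₂ / (‖q₁‖²‖q₂‖²‖q₁ − q₂‖²‖p − q₁‖²‖p − q₂‖²) = 6ζ(3)/‖p‖². -/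
open MeasureTheory

lemma tl_den_pos {u : ℝ} (hu : |u| < 1) (θ : ℝ) : 0 < 1 - 2*u*Real.cos θ + u^2 := by
  have h1 := Real.sin_sq_add_cos_sq θ
  have h2 : u^2 < 1 := by rw [sq_lt_one_iff_abs_lt_one]; exact hu
  have h3 : 1 - 2*u*Real.cos θ + u^2 = (1 - u * Real.cos θ)^2 + u^2 * Real.sin θ^2 := by
    linear_combination (-u^2) * h1
  have h4 : |u * Real.cos θ| < 1 := by
    rw [abs_mul]
    calc |u| * |Real.cos θ| ≤ |u| * 1 := by
          gcongr; exact Real.abs_cos_le_one θ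
      _ < 1 := by linarith
  have h5 := (abs_lt.1 h4).2
  rw [h3]
  have : 0 < (1 - u * Real.cos θ)^2 := by
    have : 0 < 1 - u * Real.cos θ := by linarith
    positivity
  nlinarith [sq_nonneg (u * Real.sin θ)]

lemma tl_z_norm (u θ : ℝ) : ‖(u:ℂ) * Complex.exp (θ * Complex.I)‖ = |u| := by
  rw [norm_mul, Complex.norm_exp_ofReal_mul_I, mul_one, Complex.norm_real, Real.norm_eq_abs]

lemma tl_z_pow (u θ : ℝ) (n : ℕ) : ((u:ℂ) * Complex.exp (θ * Complex.I))^n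
    = ((u^n * Real.cos (n*θ) : ℝ) : ℂ) + ((u^n * Real.sin (n*θ) : ℝ):ℂ) * Complex.I := by
  rw [mul_pow, ← Complex.exp_nat_mul, ← mul_assoc]
  have : ((n:ℂ) * (θ:ℂ)) = ((n*θ : ℝ) : ℂ) := by push_cast; rfl
  rw [this, Complex.exp_mul_I, ← Complex.ofReal_cos, ← Complex.ofReal_sin]
  push_cast; ring

lemma tl_sinSeries {u : ℝ} (hu : |u| < 1) (θ : ℝ) :
    HasSum (fun n : ℕ => u^n * Real.sin ((n+1)*θ)) (Real.sin θ / (1 - 2*u*Real.cos θ + u^2)) := by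
  have hz : ‖(u:ℂ) * Complex.exp (θ * Complex.I)‖ < 1 := by rw [tl_z_norm]; exact hu
  have h := (hasSum_geometric_of_norm_lt_one hz).mul_left (Complex.exp (θ * Complex.I))
  have h' := Complex.hasSum_im h
  have hd := tl_den_pos hu θ
  convert h' using 1
  · ext n
    rw [tl_z_pow, Complex.exp_mul_I, ← Complex.ofReal_cos, ← Complex.ofReal_sin]
    simp only [Complex.mul_im, Complex.add_re, Complex.add_im, Complex.ofReal_re, Complex.ofReal_im,
      Complex.mul_re, Complex.I_re, Complex.I_im]
    rw [add_mul, one_mul, Real.sin_add]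
    ring
  · rw [Complex.exp_mul_I, ← Complex.ofReal_cos, ← Complex.ofReal_sin]
    simp only [Complex.mul_im, Complex.add_re, Complex.add_im, Complex.ofReal_re, Complex.ofReal_im,
      Complex.mul_re, Complex.I_re, Complex.I_im, Complex.inv_re, Complex.inv_im, Complex.normSq_apply,
      Complex.sub_re, Complex.sub_im, Complex.one_re, Complex.one_im]
    have e : (1 - (u * (Real.cos θ + (Real.sin θ * 0 - 0 * 1)) - 0 * (0 + (Real.sin θ * 1 + 0 * 0))))
       * (1 - (u * (Real.cos θ + (Real.sin θ * 0 - 0 * 1)) - 0 * (0 + (Real.sin θ * 1 + 0 * 0))))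
       + (0 - (u * (0 + (Real.sin θ * 1 + 0 * 0)) + 0 * (Real.cos θ + (Real.sin θ * 0 - 0 * 1)))) *
        (0 - (u * (0 + (Real.sin θ * 1 + 0 * 0)) + 0 * (Real.cos θ + (Real.sin θ * 0 - 0 * 1))))
       = 1 - 2*u*Real.cos θ + u^2 := by
      linear_combination (u^2) * Real.sin_sq_add_cos_sq θ
    rw [e]
    field_simp
    ring

lemma hasSum_congr_fun_val {f g : ℕ → ℝ} {a b : ℝ} (h : HasSum g b) (hf : ∀ n, f n = g n)
    (hab : a = b) : HasSum f a := by
  have : f = g := funext hf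
  rw [this, hab]; exact h

lemma tl_logSeries {u : ℝ} (hu : |u| < 1) (θ : ℝ) :
    HasSum (fun n : ℕ => u^(n+1) / (n+1) * Real.cos ((n+1)*θ))
      (-(1/2) * Real.log (1 - 2*u*Real.cos θ + u^2)) := by
  have hz : ‖(u:ℂ) * Complex.exp (θ * Complex.I)‖ < 1 := by rw [tl_z_norm]; exact hu
  have h := Complex.hasSum_re (Complex.hasSum_taylorSeries_neg_log hz)
  rw [← hasSum_nat_add_iff' 1] at h
  have hd := tl_den_pos hu θ
  refine (hasSum_congr_fun_val h ?_ ?_)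
  · intro n
    rw [tl_z_pow]
    have : (((n+1:ℕ)):ℂ) = ((n+1:ℝ):ℂ) := by push_cast; rfl
    rw [this, Complex.div_ofReal_re]
    simp only [Complex.add_re, Complex.ofReal_re, Complex.mul_re, Complex.I_re, Complex.ofReal_im,
      Complex.I_im]
    push_cast
    ring
  · simp only [Finset.range_one, Finset.sum_singleton, pow_zero, Nat.cast_zero, div_zero,
      Complex.zero_re, sub_zero, Complex.neg_re, Complex.log_re]
    have : ‖1 - (u:ℂ) * Complex.exp (θ * Complex.I)‖ = Real.sqrt (1 - 2*u*Real.cos θ + u^2) := by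
      rw [Complex.norm_def]
      congr 1
      rw [Complex.exp_mul_I, ← Complex.ofReal_cos, ← Complex.ofReal_sin]
      simp [Complex.normSq_apply, -Complex.ofReal_cos, -Complex.ofReal_sin]
      linear_combination (u^2) * Real.sin_sq_add_cos_sq θ
    rw [this, Real.log_sqrt hd.le]
    ring

lemma tl_cos_int (m : ℤ) : ∫ θ in (0:ℝ)..Real.pi, Real.cos (m*θ) = if m = 0 then Real.pi else 0 := by
  split_ifs with h
  · simp [h]
  · have : (m:ℝ) ≠ 0 := by exact_mod_cast h
    rw [intervalIntegral.integral_comp_mul_left (fun x => Real.cos x) this]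
    simp [Real.sin_int_mul_pi]

lemma tl_orth (n m : ℕ) : ∫ θ in (0:ℝ)..Real.pi, Real.sin ((n+1)*θ) * Real.sin ((m+1)*θ)
    = if n = m then Real.pi/2 else 0 := by
  have h : ∀ θ : ℝ, Real.sin ((n+1)*θ) * Real.sin ((m+1)*θ) =
     (1/2) * Real.cos (((n - m : ℤ):ℝ) * θ) - (1/2) * Real.cos (((n+m+2 : ℤ):ℝ) * θ) := by
    intro θ
    have e1 : (((n - m : ℤ):ℝ) * θ) = (n+1)*θ - (m+1)*θ := by push_cast; ring
    have e2 : (((n + m + 2 : ℤ):ℝ) * θ) = (n+1)*θ + (m+1)*θ := by push_cast; ring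
    rw [e1, e2, Real.cos_sub, Real.cos_add]; ring
  simp_rw [h]
  rw [intervalIntegral.integral_sub, intervalIntegral.integral_const_mul,
    intervalIntegral.integral_const_mul, tl_cos_int, tl_cos_int]
  · have : ((n:ℤ) + m + 2) ≠ 0 := by positivity
    simp only [this, if_false, sub_eq_zero, Nat.cast_inj]
    split_ifs <;> ring
  · exact (by fun_prop : Continuous _).intervalIntegrable _ _
  · exact (by fun_prop : Continuous _).intervalIntegrable _ _

lemma tl_int_sum {c : ℕ → ℝ} (hc : Summable fun n => |c n|) {g : ℝ → ℝ} (hg : Continuous g)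
    {B : ℝ} (hB : ∀ x, |g x| ≤ B) :
    HasSum (fun n => c n * ∫ θ in (0:ℝ)..Real.pi, Real.sin ((n+1)*θ) * g θ)
      (∫ θ in (0:ℝ)..Real.pi, (∑' n, c n * Real.sin ((n+1)*θ)) * g θ) := by
  have h := intervalIntegral.hasSum_integral_of_dominated_convergence (μ := volume) (a := 0) (b := Real.pi)
    (F := fun n θ => c n * (Real.sin ((n+1)*θ) * g θ))
    (f := fun θ => (∑' n, c n * Real.sin ((n+1)*θ)) * g θ)
    (fun n _ => |c n| * B) ?_ ?_ ?_ ?_ ?_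
  · simpa [intervalIntegral.integral_const_mul] using h
  · intro n
    exact (by fun_prop : Continuous _).aestronglyMeasurable
  · intro n
    refine Filter.Eventually.of_forall fun θ _ => ?_
    rw [Real.norm_eq_abs, abs_mul, abs_mul]
    have := Real.abs_sin_le_one ((n+1)*θ)
    have := hB θ
    calc _ ≤ |c n| * (1 * B) := by gcongr
      _ = _ := by ring
  · exact Filter.Eventually.of_forall fun θ _ => hc.mul_right B
  · simp
  · refine Filter.Eventually.of_forall fun θ _ => ?_
    have hs : Summable (fun n => c n * Real.sin ((n+1)*θ)) := by
      refine Summable.of_norm_bounded hc fun n => ?_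
      rw [Real.norm_eq_abs, abs_mul]
      exact mul_le_of_le_one_right (abs_nonneg _) (Real.abs_sin_le_one _)
    have := hs.hasSum.mul_right (g θ)
    simpa [mul_assoc] using this

lemma tl_cont_sum {c : ℕ → ℝ} (hc : Summable fun n => |c n|) :
    Continuous (fun θ : ℝ => ∑' n : ℕ, c n * Real.sin ((n+1)*θ)) := by
  refine continuous_tsum (fun n => by fun_prop) hc fun n x => ?_
  rw [Real.norm_eq_abs, abs_mul]
  exact mul_le_of_le_one_right (abs_nonneg _) (Real.abs_sin_le_one _)

lemma tl_bdd_sum {c : ℕ → ℝ} (hc : Summable fun n => |c n|) (x : ℝ) :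
    |∑' n : ℕ, c n * Real.sin ((n+1)*x)| ≤ ∑' n, |c n| := by
  rw [← Real.norm_eq_abs]
  refine tsum_of_norm_bounded hc.hasSum fun n => ?_
  rw [Real.norm_eq_abs, abs_mul]
  exact mul_le_of_le_one_right (abs_nonneg _) (Real.abs_sin_le_one _)

lemma tl_parseval {c d : ℕ → ℝ} (hc : Summable fun n => |c n|) (hd : Summable fun n => |d n|) :
    HasSum (fun n => c n * d n * (Real.pi/2))
    (∫ θ in (0:ℝ)..Real.pi, (∑' n, c n * Real.sin ((n+1)*θ)) * (∑' n, d n * Real.sin ((n+1)*θ))) := by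
  have h := tl_int_sum hc (tl_cont_sum hd) (tl_bdd_sum hd)
  convert h using 2 with n
  have h2 := tl_int_sum hd (g := fun θ => Real.sin ((n+1)*θ)) (by fun_prop)
    (fun x => Real.abs_sin_le_one _)
  have h3 : HasSum (fun m => d m * ∫ θ in (0:ℝ)..Real.pi, Real.sin ((m+1)*θ) * Real.sin ((n+1)*θ))
    (d n * (Real.pi/2)) := by
    simp_rw [tl_orth]
    convert hasSum_ite_eq n (d n * (Real.pi/2)) using 2 with m
    split_ifs with h <;> simp [h]
  have h4 := h2.unique h3
  rw [mul_assoc, ← h4]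
  congr 1
  refine intervalIntegral.integral_congr fun θ _ => mul_comm _ _

/-- ratio of the smaller to the larger of two positive numbers -/
noncomputable def tlm (a b : ℝ) : ℝ := min a b / max a b

lemma tlm_nonneg {a b : ℝ} (ha : 0 < a) (hb : 0 < b) : 0 ≤ tlm a b := by
  unfold tlm; positivity

lemma tlm_pos {a b : ℝ} (ha : 0 < a) (hb : 0 < b) : 0 < tlm a b := by
  unfold tlm
  have : 0 < min a b := lt_min ha hb
  have : 0 < max a b := lt_max_of_lt_left ha
  positivity

lemma tlm_lt_one {a b : ℝ} (ha : 0 < a) (hab : a ≠ b) : tlm a b < 1 := by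
  unfold tlm
  have : 0 < max a b := lt_max_of_lt_left ha
  rw [div_lt_one this]
  exact min_lt_max.2 hab

lemma tlm_factor {a b : ℝ} (ha : 0 < a) (x : ℝ) :
    a^2 + b^2 - 2*a*b*x = (max a b)^2 * (1 - 2 * tlm a b * x + (tlm a b)^2) := by
  have hM : 0 < max a b := lt_max_of_lt_left ha
  have e : tlm a b * max a b = min a b := by unfold tlm; field_simp
  have e1 : min a b * max a b = a * b := min_mul_max a b
  have e2 : (min a b)^2 + (max a b)^2 = a^2 + b^2 := by
    rcases le_total a b with h | h <;> simp [h]; ring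
  linear_combination (-1) * e2 + 2*x*e1  + (2 * x * max a b - tlm a b * max a b - min a b) * e

lemma tlm_max_sq {a b : ℝ} (ha : 0 < a) : tlm a b * (max a b)^2 = a * b := by
  have hM : 0 < max a b := lt_max_of_lt_left ha
  have e : tlm a b * max a b = min a b := by unfold tlm; field_simp
  have e1 : min a b * max a b = a * b := min_mul_max a b
  linear_combination e1 + max a b * e

lemma tl_abs_lt {u : ℝ} (h0 : 0 ≤ u) (h1 : u < 1) : |u| < 1 := by rwa [abs_of_nonneg h0]

lemma tl_prop_series {P r : ℝ} (hP : 0 < P) (hr : 0 < r) (h : P ≠ r) (θ : ℝ) :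
    HasSum (fun n : ℕ => (tlm P r)^(n+1) / (P*r) * Real.sin ((n+1)*θ))
      (Real.sin θ / (P^2 + r^2 - 2*P*r*Real.cos θ)) := by
  have hu := tl_abs_lt (tlm_nonneg hP hr) (tlm_lt_one hP h)
  have h1 := (tl_sinSeries hu θ).mul_left (tlm P r / (P*r))
  have hd := tl_den_pos hu θ
  have hM : 0 < max P r := lt_max_of_lt_left hP
  refine hasSum_congr_fun_val h1 (fun n => by ring) ?_
  rw [tlm_factor hP, ← tlm_max_sq (b := r) hP]
  have := tlm_pos hP hr
  field_simp

/-- the logarithm obtained from the azimuthal integration -/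
noncomputable def tlL (a b θ φ : ℝ) : ℝ :=
  Real.log ((a^2 + b^2 - 2*a*b*Real.cos (θ+φ)) / (a^2 + b^2 - 2*a*b*Real.cos (θ-φ)))

lemma tl_L_series {a b : ℝ} (ha : 0 < a) (hb : 0 < b) (h : a ≠ b) (θ φ : ℝ) :
    HasSum (fun n : ℕ => 4 * ((tlm a b)^(n+1) / (n+1)) * Real.sin ((n+1)*θ) * Real.sin ((n+1)*φ))
      (tlL a b θ φ) := by
  have hu := tl_abs_lt (tlm_nonneg ha hb) (tlm_lt_one ha h)
  have h1 := ((tl_logSeries hu (θ-φ)).mul_left 2).sub ((tl_logSeries hu (θ+φ)).mul_left 2)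
  have hM : 0 < max a b := lt_max_of_lt_left ha
  refine hasSum_congr_fun_val h1 (fun n => ?_) ?_
  · rw [mul_sub, mul_add, Real.cos_sub, Real.cos_add]; ring
  · unfold tlL
    rw [tlm_factor ha, tlm_factor ha, mul_div_mul_left _ _ (by positivity),
      Real.log_div (tl_den_pos hu _).ne' (tl_den_pos hu _).ne']
    ring

lemma tl_L_nonneg {a b : ℝ} (ha : 0 < a) (hb : 0 < b) (h : a ≠ b) {θ φ : ℝ}
    (hs : 0 ≤ Real.sin θ) (ht : 0 ≤ Real.sin φ) : 0 ≤ tlL a b θ φ := by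
  have hu := tl_abs_lt (tlm_nonneg ha hb) (tlm_lt_one ha h)
  have hM : 0 < max a b := lt_max_of_lt_left ha
  have hp : ∀ x, 0 < a^2 + b^2 - 2*a*b*Real.cos x := fun x => by
    rw [tlm_factor ha]
    have := tl_den_pos hu x
    positivity
  apply Real.log_nonneg
  rw [one_le_div (hp _), Real.cos_sub, Real.cos_add]
  have : 0 ≤ a * b * (Real.sin θ * Real.sin φ) := by positivity
  linarith

lemma tl_lint_of_cont {h : ℝ → ℝ} (hc : Continuous h) (h0 : ∀ x ∈ Set.Ioo 0 Real.pi, 0 ≤ h x) :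
    ∫⁻ θ in Set.Ioo 0 Real.pi, ENNReal.ofReal (h θ) = ENNReal.ofReal (∫ θ in (0:ℝ)..Real.pi, h θ) := by
  rw [intervalIntegral.integral_of_le Real.pi_pos.le, ← integral_Ioc_eq_integral_Ioo.symm,
    ofReal_integral_eq_lintegral_ofReal]
  · exact (hc.integrableOn_Icc (a := 0) (b := Real.pi)).mono_set Set.Ioo_subset_Icc_self
  · exact ae_restrict_of_forall_mem measurableSet_Ioo h0

/-- the angular integrand -/
noncomputable def tlPhi (P a b θ φ : ℝ) : ℝ :=
  (Real.sin θ / (P^2 + a^2 - 2*P*a*Real.cos θ)) * (Real.sin φ / (P^2 + b^2 - 2*P*b*Real.cos φ)) *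
    tlL a b θ φ

lemma tl_geom_summable {u : ℝ} (h0 : 0 ≤ u) (h1 : u < 1) (C : ℝ) :
    Summable (fun n : ℕ => |u^(n+1) / C|) := by
  have := ((summable_geometric_of_lt_one h0 h1).mul_left (u / |C|))
  refine this.congr fun n => ?_
  rw [abs_div, abs_of_nonneg (show 0 ≤ u^(n+1) by positivity)]; ring

lemma tl_angular {P a b : ℝ} (hP : 0 < P) (ha : 0 < a) (hb : 0 < b) (hPa : P ≠ a) (hPb : P ≠ b)
    (hab : a ≠ b) :
    ∫⁻ θ in Set.Ioo 0 Real.pi, ∫⁻ φ in Set.Ioo 0 Real.pi, ENNReal.ofReal (tlPhi P a b θ φ)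
    = ∑' n : ℕ, ENNReal.ofReal (Real.pi^2 / (P^2*(a*b)) *
        ((tlm a b * tlm P a * tlm P b)^(n+1) / (n+1))) := by
  have hs0 := tlm_nonneg ha hb
  have hs1 := tlm_lt_one ha hab
  have hu0 := tlm_nonneg hP ha
  have hu1 := tlm_lt_one hP hPa
  have hv0 := tlm_nonneg hP hb
  have hv1 := tlm_lt_one hP hPb
  set s := tlm a b
  set u := tlm P a
  set v := tlm P b
  have hsu := tl_geom_summable hs0 hs1 1
  have hd := tl_geom_summable hu0 hu1 (P*a)
  have he := tl_geom_summable hv0 hv1 (P*b)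
  have hprop : ∀ r : ℝ, 0 < r → P ≠ r → ∀ θ ∈ Set.Ioo 0 Real.pi,
     0 ≤ Real.sin θ / (P^2 + r^2 - 2*P*r*Real.cos θ) := by
    intro r hr hPr θ hθ
    have h1 := (Real.sin_pos_of_mem_Ioo hθ).le
    have h2 := tl_den_pos (tl_abs_lt (tlm_nonneg hP hr) (tlm_lt_one hP hPr)) θ
    rw [tlm_factor hP]
    positivity
  have hcs : ∀ θ : ℝ, Summable (fun n : ℕ => |4 * (s^(n+1) / (n+1)) * Real.sin ((n+1)*θ)|) := by
    intro θ
    refine Summable.of_nonneg_of_le (fun n => abs_nonneg _) (fun n => ?_) (hsu.mul_left 4)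
    rw [abs_mul, abs_of_nonneg (show 0 ≤ 4 * (s^(n+1) / ((n:ℝ)+1)) by positivity), 
      abs_of_nonneg (show 0 ≤ s^(n+1)/1 by positivity)]
    calc 4 * (s^(n+1) / ((n:ℝ)+1)) * |Real.sin ((n+1)*θ)| ≤ 4 * (s^(n+1) / ((n:ℝ)+1)) * 1 := by
          gcongr; exact Real.abs_sin_le_one _
      _ ≤ 4 * (s^(n+1)/1) := by
          rw [mul_one]; gcongr; linarith [(Nat.cast_nonneg n : (0:ℝ) ≤ n)]
  -- rewriting as series
  have hin : ∀ θ φ, tlPhi P a b θ φ = (Real.sin θ / (P^2 + a^2 - 2*P*a*Real.cos θ)) *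
      ((∑' n : ℕ, (4 * (s^(n+1) / (n+1)) * Real.sin ((n+1)*θ)) * Real.sin ((n+1)*φ)) *
        (∑' n : ℕ, v^(n+1) / (P*b) * Real.sin ((n+1)*φ))) := by
    intro θ φ
    rw [(tl_L_series ha hb hab θ φ).tsum_eq, (tl_prop_series hP hb hPb φ).tsum_eq]
    unfold tlPhi; ring
  let f : ℕ → ℝ := fun n => 4 * (s^(n+1) / (n+1)) * (v^(n+1) / (P*b)) * (Real.pi/2)
  have hf0 : ∀ n, 0 ≤ f n := fun n => by
    have := Real.pi_pos
    simp only [f]; positivity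
  have hf : Summable (fun n => |f n|) := by
    refine Summable.of_nonneg_of_le (fun n => abs_nonneg _) (fun n => ?_) (he.mul_left (4 * (Real.pi/2)))
    have := Real.pi_pos
    rw [abs_of_nonneg (hf0 n), abs_of_nonneg (by positivity)]
    have h1 : s^(n+1) / ((n:ℝ)+1) ≤ 1 := by
      rw [div_le_one (by positivity)]
      have : s^(n+1) ≤ 1 := pow_le_one₀ hs0 hs1.le
      linarith [(Nat.cast_nonneg n : (0:ℝ) ≤ n)]
    calc f n ≤ 4 * 1 * (v^(n+1) / (P*b)) * (Real.pi/2) := by simp only [f]; gcongr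
      _ = _ := by ring
  have step1 : ∀ θ ∈ Set.Ioo 0 Real.pi, ∫⁻ φ in Set.Ioo 0 Real.pi, ENNReal.ofReal (tlPhi P a b θ φ)
     = ENNReal.ofReal ((∑' n : ℕ, f n * Real.sin ((n+1)*θ)) *
        (∑' n : ℕ, u^(n+1) / (P*a) * Real.sin ((n+1)*θ))) := by
    intro θ hθ
    rw [tl_lint_of_cont]
    · congr 1
      simp_rw [hin]
      rw [intervalIntegral.integral_const_mul, ← (tl_parseval (hcs θ) he).tsum_eq, 
        (tl_prop_series hP ha hPa θ).tsum_eq, mul_comm]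
      congr 1
      refine tsum_congr fun n => ?_
      simp only [f]; ring
    · rw [show tlPhi P a b θ = _ from funext (hin θ)]
      exact continuous_const.mul ((tl_cont_sum (hcs θ)).mul (tl_cont_sum he))
    · intro φ hφ
      unfold tlPhi
      have h1 := hprop a ha hPa θ hθ
      have h2 := hprop b hb hPb φ hφ
      have h3 := tl_L_nonneg ha hb hab (Real.sin_pos_of_mem_Ioo hθ).le (Real.sin_pos_of_mem_Ioo hφ).le
      positivity
  rw [setLIntegral_congr_fun measurableSet_Ioo step1, tl_lint_of_cont]
  · have := tl_parseval hf hd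
    rw [← this.tsum_eq, ENNReal.ofReal_tsum_of_nonneg _ this.summable]
    · refine tsum_congr fun n => ?_
      congr 1
      simp only [f]
      rw [mul_pow, mul_pow]
      field_simp
      ring
    · intro n
      have := hf0 n
      have := Real.pi_pos
      positivity
  · exact (tl_cont_sum hf).mul (tl_cont_sum hd)
  · intro θ hθ
    rw [(tl_prop_series hP ha hPa θ).tsum_eq]
    refine mul_nonneg ?_ (hprop a ha hPa θ hθ)
    have h5 : HasSum (fun n => f n * Real.sin ((n+1)*θ)) (∫ φ in (0:ℝ)..Real.pi, tlL a b θ φ * 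
       (Real.sin φ / (P^2 + b^2 - 2*P*b*Real.cos φ))) := by
      have := tl_parseval (hcs θ) he
      refine hasSum_congr_fun_val this (fun n => by simp only [f]; ring) ?_
      refine intervalIntegral.integral_congr fun φ _ => ?_
      rw [(tl_L_series ha hb hab θ φ).tsum_eq, (tl_prop_series hP hb hPb φ).tsum_eq]
    rw [h5.tsum_eq, intervalIntegral.integral_of_le Real.pi_pos.le, integral_Ioc_eq_integral_Ioo]
    refine setIntegral_nonneg measurableSet_Ioo fun φ hφ => ?_
    exact mul_nonneg (tl_L_nonneg ha hb hab (Real.sin_pos_of_mem_Ioo hθ).le (Real.sin_pos_of_mem_Ioo hφ).le)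
      (hprop b hb hPb φ hφ)

lemma tl_exp_subst {P : ℝ} (hP : 0 < P) (g : ℝ → ENNReal) :
    ∫⁻ a in Set.Ioi 0, g a = ∫⁻ t, ENNReal.ofReal (P * Real.exp t) * g (P * Real.exp t) := by
  have h := lintegral_image_eq_lintegral_abs_deriv_mul (s := Set.univ) (f := fun t => P * Real.exp t)
    (f' := fun t => P * Real.exp t) MeasurableSet.univ
    (fun x _ => ((Real.hasDerivAt_exp x).const_mul P).hasDerivWithinAt)
    (fun x _ y _ hxy => Real.exp_injective (mul_left_cancel₀ hP.ne' hxy)) g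
  have himg : (fun t => P * Real.exp t) '' Set.univ = Set.Ioi 0 := by
    ext y
    constructor
    · rintro ⟨x, -, rfl⟩
      exact mul_pos hP (Real.exp_pos x)
    · intro hy
      refine ⟨Real.log (y / P), trivial, ?_⟩
      have : 0 < y / P := div_pos hy hP
      simp only
      rw [Real.exp_log this]; field_simp
  rw [himg, Measure.restrict_univ] at h
  rw [h]
  refine lintegral_congr fun t => ?_
  rw [abs_of_pos (by positivity)]

lemma tlm_exp {P : ℝ} (hP : 0 < P) (s t : ℝ) :
    tlm (P * Real.exp s) (P * Real.exp t) = Real.exp (-|s-t|) := by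
  unfold tlm
  rcases le_total s t with h | h
  · have : P * Real.exp s ≤ P * Real.exp t := by gcongr
    rw [min_eq_left this, max_eq_right this, mul_div_mul_left _ _ hP.ne', ← Real.exp_sub,
      abs_of_nonpos (by linarith)]; ring_nf
  · have : P * Real.exp t ≤ P * Real.exp s := by gcongr
    rw [min_eq_right this, max_eq_left this, mul_div_mul_left _ _ hP.ne', ← Real.exp_sub,
      abs_of_nonneg (by linarith)]; ring_nf

lemma tl_even (g : ℝ → ENNReal) : ∫⁻ t, g |t| = 2 * ∫⁻ t in Set.Ioi 0, g t := by
  rw [← lintegral_add_compl (fun t => g |t|) (measurableSet_Ioi (a := (0:ℝ))), two_mul]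
  congr 1
  · refine setLIntegral_congr_fun measurableSet_Ioi fun t ht => ?_
    rw [abs_of_pos ht]
  · have h := (Measure.measurePreserving_neg (volume : Measure ℝ)).setLIntegral_comp_preimage_emb
      (MeasurableEquiv.neg ℝ).measurableEmbedding g (Set.Ici 0)
    rw [setLIntegral_congr (Ioi_ae_eq_Ici), ← h]
    have : (Neg.neg : ℝ → ℝ) ⁻¹' Set.Ici 0 = (Set.Ioi 0)ᶜ := by
      ext x; simp
    rw [this]
    refine setLIntegral_congr_fun measurableSet_Ioi.compl fun t ht => ?_
    rw [abs_of_nonpos (by simpa using ht)]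

lemma tl_exp_Ioi {k : ℝ} (hk : 0 < k) (c : ℝ) :
    ∫⁻ s in Set.Ioi c, ENNReal.ofReal (Real.exp (-(2*k)*s)) = ENNReal.ofReal (Real.exp (-(2*k)*c)/(2*k)) := by
  rw [← ofReal_integral_eq_lintegral_ofReal]
  · congr 1
    rw [integral_exp_mul_Ioi (by linarith)]
    field_simp
  · exact integrableOn_exp_mul_Ioi (by linarith) _
  · exact Filter.Eventually.of_forall fun x => (Real.exp_pos _).le

lemma tl_inner_pos {k : ℝ} (hk : 0 < k) {t : ℝ} (ht : 0 ≤ t) :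
    ∫⁻ s, ENNReal.ofReal (Real.exp (-k*(|t-s|+|s|))) = ENNReal.ofReal (Real.exp (-k*t)*(1/k+t)) := by
  rw [← lintegral_add_compl _ (measurableSet_Ioi (a := t)), Set.compl_Ioi]
  have hdis : Disjoint (Set.Iic 0) (Set.Ioc 0 t) :=
    Set.disjoint_left.2 fun x hx hx' => absurd hx'.1 (not_lt.2 hx)
  have hu : Set.Iic t = Set.Iic 0 ∪ Set.Ioc 0 t := (Set.Iic_union_Ioc_eq_Iic ht).symm
  rw [hu, lintegral_union measurableSet_Ioc hdis]
  have e1 : ∫⁻ s in Set.Ioi t, ENNReal.ofReal (Real.exp (-k*(|t-s|+|s|)))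
      = ENNReal.ofReal (Real.exp (-k*t) / (2*k)) := by
    have : ∀ s ∈ Set.Ioi t, ENNReal.ofReal (Real.exp (-k*(|t-s|+|s|))) =
        ENNReal.ofReal (Real.exp (k*t)) * ENNReal.ofReal (Real.exp (-(2*k)*s)) := by
      intro s hs
      have hs' : t < s := hs
      rw [← ENNReal.ofReal_mul (Real.exp_pos _).le, ← Real.exp_add, abs_of_neg (by linarith),
        abs_of_pos (by linarith)]
      ring_nf
    rw [setLIntegral_congr_fun measurableSet_Ioi this, lintegral_const_mul' _ _ ENNReal.ofReal_ne_top,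
      tl_exp_Ioi hk, ← ENNReal.ofReal_mul (Real.exp_pos _).le, ← mul_div_assoc, ← Real.exp_add]
    ring_nf
  have e2 : ∫⁻ s in Set.Iic 0, ENNReal.ofReal (Real.exp (-k*(|t-s|+|s|)))
      = ENNReal.ofReal (Real.exp (-k*t) / (2*k)) := by
    have h := (Measure.measurePreserving_neg (volume : Measure ℝ)).setLIntegral_comp_preimage_emb
      (MeasurableEquiv.neg ℝ).measurableEmbedding
      (fun s => ENNReal.ofReal (Real.exp (-k*(|t+s|+|s|)))) (Set.Ici 0)
    have h' : (Neg.neg : ℝ → ℝ) ⁻¹' Set.Ici 0 = Set.Iic 0 := by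
      ext x; simp
    rw [h'] at h
    simp only [abs_neg, ← sub_eq_add_neg] at h
    rw [h, ← setLIntegral_congr (Ioi_ae_eq_Ici)]
    have : ∀ s ∈ Set.Ioi (0:ℝ), ENNReal.ofReal (Real.exp (-k*(|t+s|+|s|))) =
        ENNReal.ofReal (Real.exp (-k*t)) * ENNReal.ofReal (Real.exp (-(2*k)*s)) := by
      intro s hs
      have hs' : 0 < s := hs
      rw [← ENNReal.ofReal_mul (Real.exp_pos _).le, ← Real.exp_add, abs_of_nonneg (by linarith),
        abs_of_pos (by linarith)]
      ring_nf
    rw [setLIntegral_congr_fun measurableSet_Ioi this, lintegral_const_mul' _ _ ENNReal.ofReal_ne_top,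
      tl_exp_Ioi hk, ← ENNReal.ofReal_mul (Real.exp_pos _).le]
    rw [mul_zero, Real.exp_zero, mul_one_div]
    
  have e3 : ∫⁻ s in Set.Ioc 0 t, ENNReal.ofReal (Real.exp (-k*(|t-s|+|s|)))
      = ENNReal.ofReal (Real.exp (-k*t) * t) := by
    have : ∀ s ∈ Set.Ioc 0 t, ENNReal.ofReal (Real.exp (-k*(|t-s|+|s|))) =
        ENNReal.ofReal (Real.exp (-k*t)) := by
      intro s hs
      rw [abs_of_nonneg (by linarith [hs.2]), abs_of_pos hs.1]
      ring_nf
    rw [setLIntegral_congr_fun measurableSet_Ioc this, setLIntegral_const, Real.volume_Ioc,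
      ← ENNReal.ofReal_mul (Real.exp_pos _).le, sub_zero]
  rw [e1, e2, e3, ← ENNReal.ofReal_add (by positivity) (by positivity), 
    ← ENNReal.ofReal_add (by positivity) (by positivity)]
  congr 1
  field_simp
  ring

lemma tl_inner {k : ℝ} (hk : 0 < k) (t : ℝ) :
    ∫⁻ s, ENNReal.ofReal (Real.exp (-k*(|t-s|+|s|))) = ENNReal.ofReal (Real.exp (-k*|t|)*(1/k+|t|)) := by
  rcases le_total 0 t with h | h
  · rw [tl_inner_pos hk h, abs_of_nonneg h]
  · rw [abs_of_nonpos h, ← tl_inner_pos hk (neg_nonneg.2 h),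
      ← (Measure.measurePreserving_neg (volume : Measure ℝ)).lintegral_comp_emb
      (MeasurableEquiv.neg ℝ).measurableEmbedding]
    refine lintegral_congr fun s => ?_
    rw [← abs_neg (t - -s), abs_neg s]
    ring_nf

lemma tl_outer {k : ℝ} (hk : 0 < k) :
    ∫⁻ t in Set.Ioi (0:ℝ), ENNReal.ofReal (Real.exp (-(2*k)*t)*(1/k+t)) = ENNReal.ofReal (3/(4*k^2)) := by
  have hd : ∀ x ∈ Set.Ici (0:ℝ), HasDerivAt (fun t => -(Real.exp (-(2*k)*t) * (3/(4*k^2) + t/(2*k))))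
      (Real.exp (-(2*k)*x)*(1/k+x)) x := by
    intro x _
    have h1 : HasDerivAt (fun t : ℝ => -(2*k)*t) (-(2*k)) x := by
      simpa using (hasDerivAt_id x).const_mul (-(2*k))
    have h2 : HasDerivAt (fun t : ℝ => 3/(4*k^2) + t/(2*k)) (1/(2*k)) x := by
      simpa using ((hasDerivAt_id x).div_const (2*k)).const_add (3/(4*k^2))
    have h3 := (h1.exp.mul h2).neg
    refine h3.congr_deriv ?_
    field_simp
    ring
  have h0 : ∀ x ∈ Set.Ioi (0:ℝ), 0 ≤ Real.exp (-(2*k)*x)*(1/k+x) := by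
    intro x hx
    have : 0 < x := hx
    positivity
  have hl : Filter.Tendsto (fun t => -(Real.exp (-(2*k)*t) * (3/(4*k^2) + t/(2*k)))) Filter.atTop (nhds 0) := by
    have a1 : Filter.Tendsto (fun t : ℝ => Real.exp (-(2*k)*t)) Filter.atTop (nhds 0) := by
      have := tendsto_rpow_mul_exp_neg_mul_atTop_nhds_zero 0 (2*k) (by linarith)
      simpa using this
    have a2 : Filter.Tendsto (fun t : ℝ => t * Real.exp (-(2*k)*t)) Filter.atTop (nhds 0) := by
      have := tendsto_rpow_mul_exp_neg_mul_atTop_nhds_zero 1 (2*k) (by linarith)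
      simpa using this
    have := ((a1.mul_const (3/(4*k^2))).add (a2.mul_const (1/(2*k)))).neg
    simp only [zero_mul, add_zero, neg_zero] at this
    refine this.congr fun t => ?_
    ring
  rw [← ofReal_integral_eq_lintegral_ofReal]
  · rw [integral_Ioi_of_hasDerivAt_of_nonneg' hd h0 hl]
    simp
  · exact integrableOn_Ioi_deriv_of_nonneg' hd h0 hl
  · exact ae_restrict_of_forall_mem measurableSet_Ioi h0

lemma tl_radial {P : ℝ} (hP : 0 < P) (n : ℕ) :
    ∫⁻ a in Set.Ioi (0:ℝ), ∫⁻ b in Set.Ioi (0:ℝ), ENNReal.ofReal (1/(a*b) *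
      (tlm a b * tlm P a * tlm P b)^(n+1)) = ENNReal.ofReal (3/(2*((n:ℝ)+1)^2)) := by
  have hk : (0:ℝ) < n + 1 := by positivity
  set k : ℝ := n + 1
  rw [tl_exp_subst hP]
  have : ∀ t : ℝ, ENNReal.ofReal (P * Real.exp t) * ∫⁻ b in Set.Ioi (0:ℝ),
      ENNReal.ofReal (1/((P * Real.exp t)*b) *
      (tlm (P * Real.exp t) b * tlm P (P * Real.exp t) * tlm P b)^(n+1)) =
      (fun x => ENNReal.ofReal (Real.exp (-(2*k)*x)*(1/k+x))) |t| := by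
    intro t
    have hm : ∀ s : ℝ, tlm P (P * Real.exp s) = Real.exp (-|s|) := by
      intro s
      have := tlm_exp hP 0 s
      simpa using this
    rw [tl_exp_subst hP, ← lintegral_const_mul' _ _ ENNReal.ofReal_ne_top]
    have : ∀ s : ℝ, ENNReal.ofReal (P * Real.exp t) * (ENNReal.ofReal (P * Real.exp s) * 
        ENNReal.ofReal (1/((P * Real.exp t)*(P * Real.exp s)) *
      (tlm (P * Real.exp t) (P * Real.exp s) * tlm P (P * Real.exp t) * tlm P (P * Real.exp s))^(n+1)))
      = ENNReal.ofReal (Real.exp (-k*|t|)) * ENNReal.ofReal (Real.exp (-k*(|t-s|+|s|))) := by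
      intro s
      rw [← ENNReal.ofReal_mul (by positivity), ← ENNReal.ofReal_mul (by positivity), 
        ← ENNReal.ofReal_mul (by positivity), tlm_exp hP, hm, hm, ← Real.exp_add, ← Real.exp_add,
        ← Real.exp_nat_mul, ← Real.exp_add]
      congr 1
      have : ((n+1:ℕ):ℝ) = k := by simp [k]
      rw [this]
      field_simp
      congr 1
      ring
    simp_rw [this]
    rw [lintegral_const_mul' _ _ ENNReal.ofReal_ne_top, tl_inner hk,
       ← ENNReal.ofReal_mul (by positivity), ← mul_assoc, ← Real.exp_add]
    congr 3
    ring_nf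
  simp_rw [this]
  rw [tl_even (fun x => ENNReal.ofReal (Real.exp (-(2*k)*x)*(1/k+x))), tl_outer hk]
  rw [show (2:ENNReal) = ENNReal.ofReal 2 by simp, ← ENNReal.ofReal_mul (by norm_num)]
  congr 1
  field_simp
  norm_num

lemma tl_halfplane {g : ℝ × ℝ → ENNReal} (hg : Measurable g) :
    ∫⁻ x, ∫⁻ y in Set.Ioi (0:ℝ), g (x, y) = ∫⁻ r in Set.Ioi (0:ℝ), ∫⁻ θ in Set.Ioo 0 Real.pi,
      ENNReal.ofReal r * g (r * Real.cos θ, r * Real.sin θ) := by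
  have h1 : ∫⁻ x, ∫⁻ y in Set.Ioi (0:ℝ), g (x, y) =
      ∫⁻ p : ℝ × ℝ, (Set.univ ×ˢ Set.Ioi (0:ℝ)).indicator g p := by
    rw [lintegral_indicator (MeasurableSet.univ.prod measurableSet_Ioi), Measure.volume_eq_prod,
      ← Measure.prod_restrict, Measure.restrict_univ, lintegral_prod _ hg.aemeasurable]
  have hm : Measurable (fun p : ℝ × ℝ => ENNReal.ofReal p.1 * g (p.1 * Real.cos p.2, p.1 * Real.sin p.2)) := by
    fun_prop
  have h2 : ∫⁻ r in Set.Ioi (0:ℝ), ∫⁻ θ in Set.Ioo 0 Real.pi,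
      ENNReal.ofReal r * g (r * Real.cos θ, r * Real.sin θ) = 
      ∫⁻ p in Set.Ioi (0:ℝ) ×ˢ Set.Ioo 0 Real.pi, ENNReal.ofReal p.1 * g (p.1 * Real.cos p.2, p.1 * Real.sin p.2) := by
    rw [Measure.volume_eq_prod, ← Measure.prod_restrict, lintegral_prod _ hm.aemeasurable]
  rw [h1, h2, ← lintegral_comp_polarCoord_symm, polarCoord_target,
    ← lintegral_indicator (measurableSet_Ioi.prod measurableSet_Ioo),
    ← lintegral_indicator (measurableSet_Ioi.prod measurableSet_Ioo)]
  refine lintegral_congr fun p => ?_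
  obtain ⟨r, θ⟩ := p
  simp only [Set.indicator, Set.mem_prod, Set.mem_Ioi, Set.mem_Ioo, polarCoord_symm_apply, smul_eq_mul,
    Set.mem_univ, true_and]
  by_cases hr : 0 < r
  · by_cases hθ : 0 < θ ∧ θ < Real.pi
    · have : 0 < Real.sin θ := Real.sin_pos_of_pos_of_lt_pi hθ.1 hθ.2
      have h3 : -Real.pi < θ := by linarith [Real.pi_pos]
      simp [hr, hθ, this, h3]
    · rw [if_neg (show ¬ (0 < r ∧ 0 < θ ∧ θ < Real.pi) from fun h => hθ h.2)]
      split_ifs with h4 h5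
      · exfalso
        have h6 : 0 < Real.sin θ := (mul_pos_iff_of_pos_left hr).1 h5
        have h7 : θ ≤ 0 := by
          by_contra hc
          exact hθ ⟨not_le.1 hc, h4.2.2⟩
        have := Real.sin_nonpos_of_nonpos_of_neg_pi_le h7 h4.2.1.le
        linarith
      · simp
      · rfl
  · simp [hr]

lemma tl_polar2 {h : ℝ → ENNReal} (hh : Measurable h) :
    ∫⁻ w : ℝ × ℝ, h (w.1^2 + w.2^2) =
      ENNReal.ofReal (2*Real.pi) * ∫⁻ s in Set.Ioi (0:ℝ), ENNReal.ofReal s * h (s^2) := by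
  have hm : Measurable (fun p : ℝ × ℝ => ENNReal.ofReal p.1 * h (p.1^2)) := by
    fun_prop
  rw [← lintegral_comp_polarCoord_symm, polarCoord_target]
  have : ∀ p : ℝ × ℝ, ENNReal.ofReal p.1 • h ((polarCoord.symm p).1^2 + (polarCoord.symm p).2^2)
      = ENNReal.ofReal p.1 * h (p.1^2) := by
    intro p
    rw [polarCoord_symm_apply, smul_eq_mul]
    congr 2
    linear_combination (p.1^2) * Real.sin_sq_add_cos_sq p.2
  simp_rw [this]
  rw [Measure.volume_eq_prod, ← Measure.prod_restrict, lintegral_prod _ hm.aemeasurable]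
  simp only [lintegral_const, Measure.restrict_apply MeasurableSet.univ, Set.univ_inter, Real.volume_Ioo]
  rw [lintegral_mul_const' _ _ ENNReal.ofReal_ne_top, mul_comm]
  congr 2
  ring

lemma tl_sq_subst {c : ℝ} (hc : 0 ≤ c) (h : ℝ → ENNReal) :
    ∫⁻ v in Set.Ioi (c^2), h v = 2 * ∫⁻ s in Set.Ioi c, ENNReal.ofReal s * h (s^2) := by
  have h1 := lintegral_image_eq_lintegral_abs_deriv_mul (s := Set.Ioi c) (f := fun t => t^2)
    (f' := fun t => 2*t) measurableSet_Ioi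
    (fun x _ => by simpa using (hasDerivAt_pow 2 x).hasDerivWithinAt)
    (fun x hx y hy hxy => by
      have hx' : 0 ≤ x := hc.trans (le_of_lt hx)
      have hy' : 0 ≤ y := hc.trans (le_of_lt hy)
      exact (sq_eq_sq₀ hx' hy').1 hxy) h
  have himg : (fun t : ℝ => t^2) '' Set.Ioi c = Set.Ioi (c^2) := by
    ext y
    constructor
    · rintro ⟨x, hx, rfl⟩
      exact pow_lt_pow_left₀ hx hc (by norm_num)
    · intro hy
      have hy' : c^2 < y := hy
      refine ⟨Real.sqrt y, Real.lt_sqrt_of_sq_lt hy', ?_⟩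
      exact Real.sq_sqrt (le_trans (sq_nonneg c) hy'.le)
  rw [himg] at h1
  rw [h1, ← lintegral_const_mul' _ _ (by simp)]
  refine setLIntegral_congr_fun measurableSet_Ioi fun s hs => ?_
  have hs' : 0 ≤ s := hc.trans (le_of_lt hs)
  rw [abs_of_nonneg (by linarith), ENNReal.ofReal_mul (by norm_num), mul_assoc]
  simp

lemma tl_shift_subst (z : ℝ) (h : ℝ → ENNReal) :
    ∫⁻ s in Set.Ioi (0:ℝ), ENNReal.ofReal s * h (z^2 + s^2) =
      ∫⁻ s in Set.Ioi |z|, ENNReal.ofReal s * h (s^2) := by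
  have h1 := tl_sq_subst le_rfl (fun v => h (z^2 + v))
  have h2 := tl_sq_subst (abs_nonneg z) h
  have h3 : ∫⁻ v in Set.Ioi ((0:ℝ)^2), h (z^2 + v) = ∫⁻ v in Set.Ioi (|z|^2), h v := by
    have := (measurePreserving_add_left (volume : Measure ℝ) (z^2)).setLIntegral_comp_preimage_emb
      (MeasurableEquiv.addLeft (z^2)).measurableEmbedding h (Set.Ioi (|z|^2))
    rw [← this]
    congr 2
    ext x
    simp
  rw [h1, h2] at h3
  exact (ENNReal.mul_right_inj (by simp) (by simp)).1 h3

lemma tl_axis {g : ℝ → ℝ → ENNReal} (hg : Measurable (Function.uncurry g)) :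
    ∫⁻ z, ∫⁻ w : ℝ × ℝ, g z (z^2 + (w.1^2 + w.2^2)) = ENNReal.ofReal (2*Real.pi) *
      ∫⁻ ρ in Set.Ioi (0:ℝ), ENNReal.ofReal ρ * ∫⁻ z in Set.Ioo (-ρ) ρ, g z (ρ^2) := by
  have h1 : ∀ z, ∫⁻ w : ℝ × ℝ, g z (z^2 + (w.1^2 + w.2^2)) =
      ENNReal.ofReal (2*Real.pi) * ∫⁻ s in Set.Ioi (0:ℝ), (Set.Ioi |z|).indicator (fun s => ENNReal.ofReal s * g z (s^2)) s := by
    intro z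
    have hz : Measurable (g z) := hg.comp (measurable_const.prodMk measurable_id)
    rw [tl_polar2 (h := fun v => g z (z^2 + v)) (by fun_prop), tl_shift_subst z (g z),
      setLIntegral_indicator measurableSet_Ioi, Set.inter_eq_left.2 (Set.Ioi_subset_Ioi (abs_nonneg z))]
  simp_rw [h1]
  rw [lintegral_const_mul' _ _ ENNReal.ofReal_ne_top, lintegral_lintegral_swap]
  · congr 1
    refine setLIntegral_congr_fun measurableSet_Ioi fun ρ hρ => ?_
    rw [← lintegral_const_mul' _ _ ENNReal.ofReal_ne_top, ← lintegral_indicator measurableSet_Ioo]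
    refine lintegral_congr fun z => ?_
    have : ρ ∈ Set.Ioi |z| ↔ z ∈ Set.Ioo (-ρ) ρ := by simp [abs_lt]
    simp only [Set.indicator, this]
  · have : (Function.uncurry fun z s => (Set.Ioi |z|).indicator (fun s => ENNReal.ofReal s * g z (s^2)) s)
      = Set.indicator {p : ℝ × ℝ | |p.1| < p.2} (fun p => ENNReal.ofReal p.2 * g p.1 (p.2^2)) := by
      ext p
      simp [Set.indicator, Function.uncurry]
    rw [this]
    refine (Measurable.indicator ?_ ?_).aemeasurable
    · have : Measurable (fun p : ℝ × ℝ => Function.uncurry g (p.1, p.2^2)) := by fun_prop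
      exact Measurable.mul (by fun_prop) this
    · exact measurableSet_lt (by fun_prop) (by fun_prop)

lemma tl_coords {f : EuclideanSpace ℝ (Fin 4) → ENNReal} (hf : Measurable f) :
    ∫⁻ q, f q = ∫⁻ x, ∫⁻ z, ∫⁻ w : ℝ × ℝ, f (!₂[x, z, w.1, w.2]) := by
  have e1 := (EuclideanSpace.volume_preserving_symm_measurableEquiv_toLp (Fin 4)).symm
  have e2 := (volume_preserving_piFinSuccAbove (fun _ : Fin 4 => ℝ) 0).symm
  have e3 := (volume_preserving_piFinSuccAbove (fun _ : Fin 3 => ℝ) 0).symm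
  have e4 := (volume_preserving_finTwoArrow ℝ).symm
  have m1 := hf.comp e1.measurable
  have m2 := m1.comp e2.measurable
  have m3 : ∀ x : ℝ, Measurable fun y => _ := fun x => m2.comp (measurable_const (a := x) |>.prodMk measurable_id)
  have m4 : ∀ x : ℝ, Measurable fun y => _ := fun x => (m3 x).comp e3.measurable
  have m5 : ∀ x z : ℝ, Measurable fun y => _ := fun x z => (m4 x).comp (measurable_const (a := z) |>.prodMk measurable_id)
  rw [← e1.lintegral_comp hf]
  refine (e2.lintegral_comp m1).symm.trans ?_
  rw [Measure.volume_eq_prod]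
  refine (lintegral_prod _ m2.aemeasurable).trans ?_
  refine lintegral_congr fun x => ?_
  refine (e3.lintegral_comp (m3 x)).symm.trans ?_
  rw [Measure.volume_eq_prod]
  refine (lintegral_prod _ (m4 x).aemeasurable).trans ?_
  refine lintegral_congr fun z => ?_
  refine (e4.lintegral_comp (m5 x z)).symm.trans ?_
  refine lintegral_congr fun w => ?_
  simp only [Function.comp]
  congr 1
  ext i
  fin_cases i <;> rfl

lemma tl_basis (p a : EuclideanSpace ℝ (Fin 4)) (hp : p ≠ 0) :
    ∃ b : OrthonormalBasis (Fin 4) ℝ (EuclideanSpace ℝ (Fin 4)), p = ‖p‖ • b 0 ∧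
      a = (inner ℝ p a / ‖p‖) • b 0 + Real.sqrt (‖a‖^2 - (inner ℝ p a / ‖p‖)^2) • b 1 := by
  have hP : ‖p‖ ≠ 0 := norm_ne_zero_iff.2 hp
  set α := inner ℝ p a / ‖p‖ with hα
  set e : EuclideanSpace ℝ (Fin 4) := (‖p‖)⁻¹ • p with he
  have hpe : p = ‖p‖ • e := by rw [he, smul_smul, mul_inv_cancel₀ hP, one_smul]
  have hen : ‖e‖ = 1 := by rw [he, norm_smul, norm_inv, norm_norm, inv_mul_cancel₀ hP]
  have hea : inner ℝ e a = α := by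
    rw [he, real_inner_smul_left, hα]; field_simp
  have hee : inner ℝ e e = (1:ℝ) := by rw [real_inner_self_eq_norm_sq, hen]; norm_num
  have hd : ‖a - α • e‖^2 = ‖a‖^2 - α^2 := by
    rw [norm_sub_sq_real, real_inner_smul_right, real_inner_comm, hea, norm_smul, hen, mul_one,
      Real.norm_eq_abs, sq_abs]
    ring
  have hs : Real.sqrt (‖a‖^2 - α^2) = ‖a - α • e‖ := by
    rw [← hd, Real.sqrt_sq (norm_nonneg _)]
  rw [hs]
  have hed : inner ℝ e (a - α • e) = (0:ℝ) := by
    rw [inner_sub_right, real_inner_smul_right, hea, hee]; ring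
  by_cases h0 : a - α • e = 0
  · have ho : Orthonormal ℝ (({0} : Set (Fin 4)).domRestrict (fun _ => e)) := by
      constructor
      · intro i; simpa using hen
      · intro i j hij
        exact absurd (Subsingleton.elim i j) hij
    obtain ⟨b, hb⟩ := ho.exists_orthonormalBasis_extension_of_card_eq (by simp)
    have hb0 := hb 0 rfl
    refine ⟨b, ?_, ?_⟩
    · rw [hb0]; exact hpe
    · rw [h0, norm_zero, zero_smul, add_zero, hb0]
      exact sub_eq_zero.1 h0
  · have hn : ‖a - α • e‖ ≠ 0 := norm_ne_zero_iff.2 h0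
    set d := (‖a - α • e‖)⁻¹ • (a - α • e) with hdd
    have hdn : ‖d‖ = 1 := by rw [hdd, norm_smul, norm_inv, norm_norm, inv_mul_cancel₀ hn]
    have hedd : inner ℝ e d = (0:ℝ) := by rw [hdd, real_inner_smul_right, hed, mul_zero]
    have hded : inner ℝ d e = (0:ℝ) := by rw [real_inner_comm, hedd]
    have ho : Orthonormal ℝ (({0, 1} : Set (Fin 4)).domRestrict (![e, d, 0, 0])) := by
      constructor
      · rintro ⟨i, hi⟩
        rcases hi with rfl | rfl
        · simpa using hen
        · simpa using hdn
      · rintro ⟨i, hi⟩ ⟨j, hj⟩ hij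
        rcases hi with rfl | rfl <;> rcases hj with rfl | rfl
        · exact absurd rfl hij
        · simpa using hedd
        · simpa using hded
        · exact absurd rfl hij
    obtain ⟨b, hb⟩ := ho.exists_orthonormalBasis_extension_of_card_eq (by simp)
    have hb0 : b 0 = e := by simpa using hb 0 (by simp)
    have hb1 : b 1 = d := by simpa using hb 1 (by simp)
    refine ⟨b, ?_, ?_⟩
    · rw [hb0]; exact hpe
    · have hfin : ‖a - α • e‖ • d = a - α • e := by
        rw [hdd, smul_smul (‖a - α • e‖), mul_inv_cancel₀ hn, one_smul]
      rw [hb0, hb1, hfin]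
      abel

lemma tl_R (p a : EuclideanSpace ℝ (Fin 4)) (hp : p ≠ 0) {g : ℝ → ℝ → ℝ → ENNReal}
    (hg : Measurable (fun v : ℝ × ℝ × ℝ => g v.1 v.2.1 v.2.2)) :
    ∫⁻ q, g (‖q‖^2) (inner ℝ p q) (inner ℝ a q) = ENNReal.ofReal (2*Real.pi) *
      ∫⁻ x, ∫⁻ ρ in Set.Ioi (0:ℝ), ENNReal.ofReal ρ * ∫⁻ z in Set.Ioo (-ρ) ρ,
        g (x^2 + ρ^2) (‖p‖*x)
          ((inner ℝ p a / ‖p‖) * x + Real.sqrt (‖a‖^2 - (inner ℝ p a / ‖p‖)^2) * z) := by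
  obtain ⟨b, h0, h1⟩ := tl_basis p a hp
  set α := inner ℝ p a / ‖p‖
  set β := Real.sqrt (‖a‖^2 - α^2)
  have hM : Measurable (fun q : EuclideanSpace ℝ (Fin 4) => g (‖q‖^2) (inner ℝ p q) (inner ℝ a q)) := by
    have : Measurable (fun q : EuclideanSpace ℝ (Fin 4) => ((‖q‖^2, inner ℝ p q, inner ℝ a q) : ℝ × ℝ × ℝ)) := by
      fun_prop
    exact hg.comp this
  have e1 := b.measurePreserving_repr_symm
  rw [← e1.lintegral_comp hM]
  refine (tl_coords (hM.comp e1.measurable)).trans ?_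
  rw [← lintegral_const_mul' _ _ ENNReal.ofReal_ne_top]
  refine lintegral_congr fun x => ?_
  rw [← tl_axis (g := fun z v => g (x^2 + v) (‖p‖*x) (α*x + β*z))]
  · refine lintegral_congr fun z => lintegral_congr fun w => ?_
    have c0 : ∀ v : EuclideanSpace ℝ (Fin 4), inner ℝ (b 0) (b.repr.symm v) = v 0 := fun v => by
      rw [← b.repr_apply_apply]; simp
    have c1 : ∀ v : EuclideanSpace ℝ (Fin 4), inner ℝ (b 1) (b.repr.symm v) = v 1 := fun v => by
      rw [← b.repr_apply_apply]; simp
    simp only [Function.comp_apply]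
    congr 1
    · rw [LinearIsometryEquiv.norm_map, EuclideanSpace.norm_sq_eq, Fin.sum_univ_four]
      simp
      ring
    · nth_rewrite 1 [h0]
      rw [real_inner_smul_left, c0]
      simp
    · nth_rewrite 1 [h1]
      rw [inner_add_left, real_inner_smul_left, real_inner_smul_left, c0, c1]
      simp
  · have : Measurable (fun v : ℝ × ℝ => ((x^2 + v.2, ‖p‖*x, α*x+β*v.1) : ℝ × ℝ × ℝ)) := by fun_prop
    exact hg.comp this

/-- the integrand in terms of scalar products -/
noncomputable def tlG (P A B v w c : ℝ) : ℝ :=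
  1 / (A * v * (A + v - 2*c) * (P^2 + A - 2*B) * (P^2 + v - 2*w))

/-- the inner integral -/
noncomputable def tlH (P A B : ℝ) : ENNReal :=
  ENNReal.ofReal (2*Real.pi) *
      ∫⁻ x, ∫⁻ ρ in Set.Ioi (0:ℝ), ENNReal.ofReal ρ * ∫⁻ z in Set.Ioo (-ρ) ρ,
        ENNReal.ofReal (tlG P A B (x^2 + ρ^2) (P*x)
          ((B / P) * x + Real.sqrt (A - (B / P)^2) * z))

lemma tlH_measurable (P : ℝ) : Measurable (fun v : ℝ × ℝ × ℝ => tlH P v.1 v.2.1) := by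
  unfold tlH
  refine Measurable.const_mul ?_ _
  refine Measurable.lintegral_prod_right' (f := fun y : (ℝ × ℝ × ℝ) × ℝ => ∫⁻ ρ in Set.Ioi (0:ℝ), ENNReal.ofReal ρ * 
    ∫⁻ z in Set.Ioo (-ρ) ρ,
        ENNReal.ofReal (tlG P y.1.1 y.1.2.1 (y.2^2 + ρ^2) (P*y.2)
          ((y.1.2.1 / P) * y.2 + Real.sqrt (y.1.1 - (y.1.2.1 / P)^2) * z))) ?_
  refine Measurable.lintegral_prod_right' (f := fun y : ((ℝ × ℝ × ℝ) × ℝ) × ℝ => ENNReal.ofReal y.2 * 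
    ∫⁻ z in Set.Ioo (-y.2) y.2,
        ENNReal.ofReal (tlG P y.1.1.1 y.1.1.2.1 (y.1.2^2 + y.2^2) (P*y.1.2)
          ((y.1.1.2.1 / P) * y.1.2 + Real.sqrt (y.1.1.1 - (y.1.1.2.1 / P)^2) * z))) ?_
  refine Measurable.mul (by fun_prop) ?_
  simp_rw [← lintegral_indicator measurableSet_Ioo]
  refine Measurable.lintegral_prod_right' (f := fun y : (((ℝ × ℝ × ℝ) × ℝ) × ℝ) × ℝ => 
    (Set.Ioo (-y.1.2) y.1.2).indicator (fun z => 
        ENNReal.ofReal (tlG P y.1.1.1.1 y.1.1.1.2.1 (y.1.1.2^2 + y.1.2^2) (P*y.1.1.2)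
          ((y.1.1.1.2.1 / P) * y.1.1.2 + Real.sqrt (y.1.1.1.1 - (y.1.1.1.2.1 / P)^2) * z))) y.2) ?_
  have : (fun y : (((ℝ × ℝ × ℝ) × ℝ) × ℝ) × ℝ => 
    (Set.Ioo (-y.1.2) y.1.2).indicator (fun z => 
        ENNReal.ofReal (tlG P y.1.1.1.1 y.1.1.1.2.1 (y.1.1.2^2 + y.1.2^2) (P*y.1.1.2)
          ((y.1.1.1.2.1 / P) * y.1.1.2 + Real.sqrt (y.1.1.1.1 - (y.1.1.1.2.1 / P)^2) * z))) y.2)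
     = Set.indicator ({y | -y.1.2 < y.2} ∩ {y | y.2 < y.1.2}) (fun y => 
       ENNReal.ofReal (tlG P y.1.1.1.1 y.1.1.1.2.1 (y.1.1.2^2 + y.1.2^2) (P*y.1.1.2)
          ((y.1.1.1.2.1 / P) * y.1.1.2 + Real.sqrt (y.1.1.1.1 - (y.1.1.1.2.1 / P)^2) * y.2))) := by
    ext y
    simp [Set.indicator]
  rw [this]
  refine Measurable.indicator ?_ ?_
  · unfold tlG; fun_prop
  · exact (measurableSet_lt (by fun_prop) (by fun_prop)).inter (measurableSet_lt (by fun_prop) (by fun_prop))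

lemma tl_step1 (p : EuclideanSpace ℝ (Fin 4)) (hp : p ≠ 0) :
    ∫⁻ q : EuclideanSpace ℝ (Fin 4) × EuclideanSpace ℝ (Fin 4), ENNReal.ofReal (
      1 / (‖q.1‖ ^ 2 * ‖q.2‖ ^ 2 * ‖q.1 - q.2‖ ^ 2 * ‖p - q.1‖ ^ 2 * ‖p - q.2‖ ^ 2))
    = ENNReal.ofReal (2*Real.pi) * ∫⁻ x, ∫⁻ ρ in Set.Ioi (0:ℝ), ENNReal.ofReal (2 * ρ^2) *
        tlH ‖p‖ (x^2 + ρ^2) (‖p‖ * x) := by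
  rw [Measure.volume_eq_prod, lintegral_prod _ (by fun_prop)]
  have h1 : ∀ a : EuclideanSpace ℝ (Fin 4), ∫⁻ q : EuclideanSpace ℝ (Fin 4), ENNReal.ofReal (
      1 / (‖a‖ ^ 2 * ‖q‖ ^ 2 * ‖a - q‖ ^ 2 * ‖p - a‖ ^ 2 * ‖p - q‖ ^ 2)) = 
      tlH ‖p‖ (‖a‖^2) (inner ℝ p a) := by
    intro a
    have := tl_R p a hp (g := fun v w c => ENNReal.ofReal (tlG ‖p‖ (‖a‖^2) (inner ℝ p a) v w c))
      (by unfold tlG; fun_prop)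
    unfold tlH
    rw [← this]
    refine lintegral_congr fun q => ?_
    unfold tlG
    rw [norm_sub_sq_real a q, norm_sub_sq_real p a, norm_sub_sq_real p q]
    congr 3
    all_goals ring
  simp_rw [h1]
  have := tl_R p 0 hp (g := fun A B _ => tlH ‖p‖ A B) (tlH_measurable ‖p‖)
  rw [this]
  congr 1
  refine lintegral_congr fun x => ?_
  refine setLIntegral_congr_fun measurableSet_Ioi fun ρ hρ => ?_
  have hρ' : 0 < ρ := hρ
  beta_reduce
  rw [setLIntegral_const, Real.volume_Ioo, mul_comm (tlH _ _ _), ← mul_assoc, ← ENNReal.ofReal_mul hρ'.le]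
  congr 2
  ring

/-- integrand after the azimuthal integration -/
noncomputable def tlN (P x y x' y' : ℝ) : ℝ :=
  y * y' / ((x^2+y^2) * (x'^2+y'^2) * (P^2 + (x^2+y^2) - 2*(P*x)) * (P^2 + (x'^2+y'^2) - 2*(P*x'))) *
   Real.log (((x^2+y^2) + (x'^2+y'^2) - 2*(x*x') + 2*(y*y')) / ((x^2+y^2) + (x'^2+y'^2) - 2*(x*x') - 2*(y*y')))

lemma tl_zint {b y y' : ℝ} (hy : 0 < y) (hy' : 0 < y') (hb : 2*(y*y') < b) :
    ∫⁻ z in Set.Ioo (-y') y', ENNReal.ofReal (1/(b - 2*(y*z))) =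
      ENNReal.ofReal (1/(2*y) * Real.log ((b + 2*(y*y'))/(b - 2*(y*y')))) := by
  have hpos : ∀ z ∈ Set.Icc (-y') y', 0 < b - 2*(y*z) := by
    intro z hz
    have : y * z ≤ y * y' := by gcongr; exact hz.2
    linarith
  have hc : ContinuousOn (fun z => 1/(b - 2*(y*z))) (Set.Icc (-y') y') := by
    refine ContinuousOn.div (by fun_prop) (by fun_prop) fun z hz => (hpos z hz).ne'
  rw [← ofReal_integral_eq_lintegral_ofReal]
  · congr 1
    rw [← integral_Ioc_eq_integral_Ioo, ← intervalIntegral.integral_of_le (by linarith)]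
    have hle : -y' ≤ y' := by linarith
    rw [intervalIntegral.integral_eq_sub_of_hasDerivAt (f := fun z => -(1/(2*y)) * Real.log (b - 2*(y*z)))]
    · have h1 := hpos y' ⟨hle, le_rfl⟩
      have h2 := hpos (-y') ⟨le_rfl, hle⟩
      rw [Real.log_div (by nlinarith) h1.ne']
      rw [show b - 2*(y * -y') = b + 2*(y*y') by ring]
      ring
    · intro z hz
      rw [Set.uIcc_of_le hle] at hz
      have h1 := hpos z hz
      have h2 : HasDerivAt (fun z => b - 2*(y*z)) (-(2*y)) z := by
        have := (((hasDerivAt_id z).const_mul y).const_mul 2).const_sub b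
        simpa using this
      refine ((h2.log h1.ne').const_mul (-(1/(2*y)))).congr_deriv ?_
      field_simp
    · rw [← Set.uIcc_of_le hle] at hc
      exact hc.intervalIntegrable
  · exact (hc.integrableOn_Icc).mono_set Set.Ioo_subset_Icc_self
  · refine ae_restrict_of_forall_mem measurableSet_Ioo fun z hz => ?_
    have := hpos z (Set.Ioo_subset_Icc_self hz)
    simp only [Pi.zero_apply]
    positivity

lemma tl_step2 {P : ℝ} (hP : 0 < P) (x : ℝ) {y : ℝ} (hy : 0 < y) :
    ENNReal.ofReal (2 * y^2) * tlH P (x^2 + y^2) (P * x) = ENNReal.ofReal (2*Real.pi) * 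
     ∫⁻ x', ∫⁻ y' in Set.Ioi (0:ℝ), ENNReal.ofReal (tlN P x y x' y') := by
  unfold tlH
  rw [mul_left_comm]
  congr 1
  rw [← lintegral_const_mul' _ _ ENNReal.ofReal_ne_top]
  have e1 : P * x / P = x := by field_simp
  have e2 : Real.sqrt (x^2 + y^2 - x^2) = y := by
    rw [add_sub_cancel_left, Real.sqrt_sq hy.le]
  rw [e1, e2]
  have hae : ∀ᵐ x' : ℝ, x' ≠ x := by simp [ae_iff]
  refine lintegral_congr_ae ?_
  filter_upwards [hae] with x' hx'
  rw [← lintegral_const_mul' _ _ ENNReal.ofReal_ne_top]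
  refine setLIntegral_congr_fun measurableSet_Ioi fun y' hy' => ?_
  have hy0 : 0 < y' := hy'
  beta_reduce
  have hxx : 0 < (x - x')^2 := by
    have : x - x' ≠ 0 := sub_ne_zero.2 (Ne.symm hx')
    positivity
  have hb : 2*(y*y') < (x^2+y^2) + (x'^2+y'^2) - 2*(x*x') := by
    nlinarith [sq_nonneg (y-y')]
  have hD : ∀ s t : ℝ, 0 ≤ P^2 + (s^2 + t^2) - 2*(P*s) := fun s t => by
    nlinarith [sq_nonneg (P - s), sq_nonneg t]
  have hA : 0 < x^2+y^2 := by positivity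
  have hv : 0 < x'^2+y'^2 := by positivity
  have h3 : ∀ z, ENNReal.ofReal (tlG P (x^2+y^2) (P*x) (x'^2+y'^2) (P*x') (x*x' + y*z)) =
      ENNReal.ofReal (1/((x^2+y^2) * (x'^2+y'^2) * (P^2 + (x^2+y^2) - 2*(P*x)) * (P^2 + (x'^2+y'^2) - 2*(P*x')))) *
      ENNReal.ofReal (1/(((x^2+y^2) + (x'^2+y'^2) - 2*(x*x')) - 2*(y*z))) := by
    intro z
    have := hD x y
    have := hD x' y'
    rw [← ENNReal.ofReal_mul (by positivity)]
    unfold tlG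
    rw [one_div_mul_one_div]
    congr 2
    ring
  simp_rw [h3]
  rw [lintegral_const_mul' _ _ ENNReal.ofReal_ne_top, tl_zint hy hy0 hb]
  have := hD x y
  have := hD x' y'
  rw [← ENNReal.ofReal_mul (by positivity), ← ENNReal.ofReal_mul (by positivity),
    ← ENNReal.ofReal_mul (by positivity)]
  congr 1
  unfold tlN
  field_simp

lemma tl_N_polar {P r r' : ℝ} (hr : 0 < r) (hr' : 0 < r') (θ φ : ℝ) :
    ENNReal.ofReal r * (ENNReal.ofReal r' * ENNReal.ofReal (tlN P (r * Real.cos θ) (r * Real.sin θ)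
      (r' * Real.cos φ) (r' * Real.sin φ))) = ENNReal.ofReal (tlPhi P r r' θ φ) := by
  rw [← ENNReal.ofReal_mul hr'.le, ← ENNReal.ofReal_mul hr.le]
  congr 1
  have e : ∀ s t : ℝ, (s * Real.cos t)^2 + (s * Real.sin t)^2 = s^2 := fun s t => by
    linear_combination s^2 * Real.sin_sq_add_cos_sq t
  unfold tlN tlPhi tlL
  rw [e, e]
  have l1 : r^2 + r'^2 - 2 * (r * Real.cos θ * (r' * Real.cos φ)) + 2 * (r * Real.sin θ * (r' * Real.sin φ))
     = r^2 + r'^2 - 2*r*r'*Real.cos (θ+φ) := by rw [Real.cos_add]; ring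
  have l2 : r^2 + r'^2 - 2 * (r * Real.cos θ * (r' * Real.cos φ)) - 2 * (r * Real.sin θ * (r' * Real.sin φ))
     = r^2 + r'^2 - 2*r*r'*Real.cos (θ-φ) := by rw [Real.cos_sub]; ring
  have l3 : P^2 + r^2 - 2*(P*(r*Real.cos θ)) = P^2 + r^2 - 2*P*r*Real.cos θ := by ring
  have l4 : P^2 + r'^2 - 2*(P*(r'*Real.cos φ)) = P^2 + r'^2 - 2*P*r'*Real.cos φ := by ring
  rw [l1, l2, l3, l4]
  generalize P^2 + r^2 - 2*P*r*Real.cos θ = D1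
  generalize P^2 + r'^2 - 2*P*r'*Real.cos φ = D2
  rw [← mul_assoc, ← mul_assoc]
  congr 1
  rw [div_mul_div_comm, ← mul_div_assoc]
  rw [show r * r' * (r * Real.sin θ * (r' * Real.sin φ)) = (r^2*r'^2) * (Real.sin θ * Real.sin φ) by ring,
    show r^2*r'^2*D1*D2 = (r^2*r'^2)*(D1*D2) by ring, mul_div_mul_left _ _ (by positivity)]

lemma tl_step3 {P : ℝ} :
   ∫⁻ x, ∫⁻ y in Set.Ioi (0:ℝ), ∫⁻ x', ∫⁻ y' in Set.Ioi (0:ℝ), ENNReal.ofReal (tlN P x y x' y') =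
   ∫⁻ r in Set.Ioi (0:ℝ), ∫⁻ r' in Set.Ioi (0:ℝ), ∫⁻ θ in Set.Ioo 0 Real.pi, ∫⁻ φ in Set.Ioo 0 Real.pi,
     ENNReal.ofReal (tlPhi P r r' θ φ) := by
  have h1 : ∀ x y, ∫⁻ x', ∫⁻ y' in Set.Ioi (0:ℝ), ENNReal.ofReal (tlN P x y x' y') = 
    ∫⁻ r' in Set.Ioi (0:ℝ), ∫⁻ φ in Set.Ioo 0 Real.pi, ENNReal.ofReal r' * 
      ENNReal.ofReal (tlN P x y (r' * Real.cos φ) (r' * Real.sin φ)) := by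
    intro x y
    exact tl_halfplane (g := fun w => ENNReal.ofReal (tlN P x y w.1 w.2)) (by unfold tlN; fun_prop)
  simp_rw [h1]
  have h2 := tl_halfplane (g := fun w : ℝ × ℝ => ∫⁻ r' in Set.Ioi (0:ℝ), ∫⁻ φ in Set.Ioo 0 Real.pi, ENNReal.ofReal r' * 
      ENNReal.ofReal (tlN P w.1 w.2 (r' * Real.cos φ) (r' * Real.sin φ))) ?_
  · refine h2.trans ?_
    refine setLIntegral_congr_fun measurableSet_Ioi fun r hr => ?_
    beta_reduce
    have h3 : ∀ θ : ℝ, ENNReal.ofReal r * ∫⁻ r' in Set.Ioi (0:ℝ), ∫⁻ φ in Set.Ioo 0 Real.pi, ENNReal.ofReal r' * 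
      ENNReal.ofReal (tlN P (r * Real.cos θ) (r * Real.sin θ) (r' * Real.cos φ) (r' * Real.sin φ)) =
      ∫⁻ r' in Set.Ioi (0:ℝ), ∫⁻ φ in Set.Ioo 0 Real.pi, ENNReal.ofReal (tlPhi P r r' θ φ) := by
      intro θ
      rw [← lintegral_const_mul' _ _ ENNReal.ofReal_ne_top]
      refine setLIntegral_congr_fun measurableSet_Ioi fun r' hr' => ?_
      beta_reduce
      rw [← lintegral_const_mul' _ _ ENNReal.ofReal_ne_top]
      refine lintegral_congr fun φ => ?_
      exact tl_N_polar hr hr' θ φ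
    simp_rw [h3]
    rw [lintegral_lintegral_swap]
    refine Measurable.aemeasurable ?_
    refine Measurable.lintegral_prod_right' (f := fun v : (ℝ × ℝ) × ℝ => ENNReal.ofReal (tlPhi P r v.1.2 v.1.1 v.2)) ?_
    unfold tlPhi tlL
    fun_prop
  · refine Measurable.lintegral_prod_right' (f := fun v : (ℝ × ℝ) × ℝ => ∫⁻ φ in Set.Ioo 0 Real.pi, ENNReal.ofReal v.2 * 
      ENNReal.ofReal (tlN P v.1.1 v.1.2 (v.2 * Real.cos φ) (v.2 * Real.sin φ))) ?_
    refine Measurable.lintegral_prod_right' (f := fun v : ((ℝ × ℝ) × ℝ) × ℝ => ENNReal.ofReal v.1.2 * 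
      ENNReal.ofReal (tlN P v.1.1.1 v.1.1.2 (v.1.2 * Real.cos v.2) (v.1.2 * Real.sin v.2))) ?_
    unfold tlN
    fun_prop

lemma tl_step4 {P : ℝ} (hP : 0 < P) : 
   ∫⁻ r in Set.Ioi (0:ℝ), ∫⁻ r' in Set.Ioi (0:ℝ), ∫⁻ θ in Set.Ioo 0 Real.pi, ∫⁻ φ in Set.Ioo 0 Real.pi,
     ENNReal.ofReal (tlPhi P r r' θ φ) = 
   ∑' n : ℕ, ENNReal.ofReal (3 * Real.pi^2/(2*P^2) * (1/((n:ℝ)+1)^3)) := by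
  have hmm : ∀ n : ℕ, Measurable (fun v : ℝ × ℝ => ENNReal.ofReal (Real.pi^2 / (P^2*(v.1*v.2)) *
        ((tlm v.1 v.2 * tlm P v.1 * tlm P v.2)^(n+1) / (n+1)))) := by
    intro n
    unfold tlm
    fun_prop
  have hae : ∀ c : ℝ, ∀ᵐ r : ℝ ∂(volume.restrict (Set.Ioi 0)), c ≠ r := by
    intro c
    refine ae_restrict_of_ae ?_
    have : ∀ᵐ x' : ℝ, x' ≠ c := by simp [ae_iff]
    filter_upwards [this] with x hx using hx.symm
  have h1 : ∫⁻ r in Set.Ioi (0:ℝ), ∫⁻ r' in Set.Ioi (0:ℝ), ∫⁻ θ in Set.Ioo 0 Real.pi, ∫⁻ φ in Set.Ioo 0 Real.pi,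
     ENNReal.ofReal (tlPhi P r r' θ φ) = ∫⁻ r in Set.Ioi (0:ℝ), ∫⁻ r' in Set.Ioi (0:ℝ),
      ∑' n : ℕ, ENNReal.ofReal (Real.pi^2 / (P^2*(r*r')) *
        ((tlm r r' * tlm P r * tlm P r')^(n+1) / (n+1))) := by
    refine lintegral_congr_ae ?_
    filter_upwards [hae P, ae_restrict_mem measurableSet_Ioi] with r hr hr0
    refine lintegral_congr_ae ?_
    filter_upwards [hae P, hae r, ae_restrict_mem measurableSet_Ioi] with r' hr' hrr hr0'
    exact tl_angular hP hr0 hr0' hr hr' hrr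
  rw [h1]
  have h2 : ∀ r : ℝ, ∫⁻ r' in Set.Ioi (0:ℝ), ∑' n : ℕ, ENNReal.ofReal (Real.pi^2 / (P^2*(r*r')) *
        ((tlm r r' * tlm P r * tlm P r')^(n+1) / (n+1))) = ∑' n : ℕ, ∫⁻ r' in Set.Ioi (0:ℝ), ENNReal.ofReal (Real.pi^2 / (P^2*(r*r')) *
        ((tlm r r' * tlm P r * tlm P r')^(n+1) / (n+1))) := by
    intro r
    refine lintegral_tsum fun n => ?_
    exact ((hmm n).comp (measurable_const (a := r) |>.prodMk measurable_id)).aemeasurable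
  simp_rw [h2]
  rw [lintegral_tsum fun n => (Measurable.lintegral_prod_right' (hmm n)).aemeasurable]
  refine tsum_congr fun n => ?_
  have h3 : ∀ r r' : ℝ, ENNReal.ofReal (Real.pi^2 / (P^2*(r*r')) *
        ((tlm r r' * tlm P r * tlm P r')^(n+1) / (n+1))) = ENNReal.ofReal (Real.pi^2/P^2/(n+1)) * 
        ENNReal.ofReal (1/(r*r') * (tlm r r' * tlm P r * tlm P r')^(n+1)) := by
    intro r r'
    rw [← ENNReal.ofReal_mul (by positivity)]
    congr 1
    rw [mul_comm (P^2), ← div_div (Real.pi^2)]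
    ring
  simp_rw [h3, lintegral_const_mul' _ _ ENNReal.ofReal_ne_top]
  rw [tl_radial hP, ← ENNReal.ofReal_mul (by positivity)]
  congr 1
  field_simp

lemma tl_total (p : EuclideanSpace ℝ (Fin 4)) (hp : p ≠ 0) :
    ∫⁻ q : EuclideanSpace ℝ (Fin 4) × EuclideanSpace ℝ (Fin 4), ENNReal.ofReal (
      1 / (‖q.1‖ ^ 2 * ‖q.2‖ ^ 2 * ‖q.1 - q.2‖ ^ 2 * ‖p - q.1‖ ^ 2 * ‖p - q.2‖ ^ 2))
    = ENNReal.ofReal (6 * Real.pi^4 / ‖p‖^2 * ∑' n : ℕ, (1/((n:ℝ)+1)^3)) := by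
  have hP : 0 < ‖p‖ := norm_pos_iff.2 hp
  have hsum : Summable (fun n : ℕ => 1/((n:ℝ)+1)^3) := by
    have := (summable_nat_add_iff 1).2 (Real.summable_one_div_nat_pow.2 (by norm_num : 1 < 3))
    simpa using this
  rw [tl_step1 p hp]
  have h1 : ∀ x : ℝ, ∫⁻ ρ in Set.Ioi (0:ℝ), ENNReal.ofReal (2 * ρ^2) * tlH ‖p‖ (x^2 + ρ^2) (‖p‖ * x) =
      ENNReal.ofReal (2*Real.pi) * ∫⁻ ρ in Set.Ioi (0:ℝ), 
     ∫⁻ x', ∫⁻ y' in Set.Ioi (0:ℝ), ENNReal.ofReal (tlN ‖p‖ x ρ x' y') := by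
    intro x
    rw [← lintegral_const_mul' _ _ ENNReal.ofReal_ne_top]
    exact setLIntegral_congr_fun measurableSet_Ioi fun ρ hρ => tl_step2 hP x hρ
  simp_rw [h1]
  rw [lintegral_const_mul' _ _ ENNReal.ofReal_ne_top, tl_step3, tl_step4 hP,
    ← ENNReal.ofReal_tsum_of_nonneg (fun n => by positivity) (hsum.mul_left _), tsum_mul_left,
    ← ENNReal.ofReal_mul (by positivity), ← ENNReal.ofReal_mul (by positivity)]
  congr 1
  field_simp
  ring

/-- The two-loop momentum-space `p`-integral of the wheel with three spokes:
its value is the period `P₃ = 6ζ(3)` divided by `p²`. -/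
theorem two_loop_p_integral_eq_six_zeta_three_div_psq
    (p : EuclideanSpace ℝ (Fin 4)) (hp : p ≠ 0) :
    Integrable (fun q : EuclideanSpace ℝ (Fin 4) × EuclideanSpace ℝ (Fin 4) =>
      1 / (‖q.1‖ ^ 2 * ‖q.2‖ ^ 2 * ‖q.1 - q.2‖ ^ 2 * ‖p - q.1‖ ^ 2 * ‖p - q.2‖ ^ 2)) ∧
    (((1 / Real.pi ^ 4) * ∫ q : EuclideanSpace ℝ (Fin 4) × EuclideanSpace ℝ (Fin 4),
        1 / (‖q.1‖ ^ 2 * ‖q.2‖ ^ 2 * ‖q.1 - q.2‖ ^ 2 * ‖p - q.1‖ ^ 2 * ‖p - q.2‖ ^ 2) : ℝ) : ℂ)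
      = 6 * riemannZeta 3 / ((‖p‖ : ℂ) ^ 2) := by
  have hP : 0 < ‖p‖ := norm_pos_iff.2 hp
  have htot := tl_total p hp
  have hmeas : Measurable (fun q : EuclideanSpace ℝ (Fin 4) × EuclideanSpace ℝ (Fin 4) =>
      1 / (‖q.1‖ ^ 2 * ‖q.2‖ ^ 2 * ‖q.1 - q.2‖ ^ 2 * ‖p - q.1‖ ^ 2 * ‖p - q.2‖ ^ 2)) := by
    fun_prop
  have hnn : ∀ q : EuclideanSpace ℝ (Fin 4) × EuclideanSpace ℝ (Fin 4), 0 ≤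
      1 / (‖q.1‖ ^ 2 * ‖q.2‖ ^ 2 * ‖q.1 - q.2‖ ^ 2 * ‖p - q.1‖ ^ 2 * ‖p - q.2‖ ^ 2) := by
    intro q; positivity
  have hnonneg : 0 ≤ ∑' n : ℕ, (1/((n:ℝ)+1)^3) := tsum_nonneg fun n => by positivity
  have hz : riemannZeta 3 = ((∑' n : ℕ, (1/((n:ℝ)+1)^3) : ℝ) : ℂ) := by
    have := zeta_eq_tsum_one_div_nat_add_one_cpow (s := 3) (by norm_num)
    rw [this]
    push_cast
    refine tsum_congr fun n => ?_
    norm_cast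
  refine ⟨⟨hmeas.aestronglyMeasurable, ?_⟩, ?_⟩
  · rw [hasFiniteIntegral_iff_ofReal (Filter.Eventually.of_forall hnn), htot]
    exact ENNReal.ofReal_lt_top
  · rw [integral_eq_lintegral_of_nonneg_ae (Filter.Eventually.of_forall hnn) hmeas.aestronglyMeasurable,
      htot, ENNReal.toReal_ofReal (by positivity), hz]
    have hpi : (Real.pi : ℂ) ≠ 0 := by exact_mod_cast Real.pi_ne_zero
    have hPc : (‖p‖ : ℂ) ≠ 0 := by exact_mod_cast hP.ne'
    generalize (∑' n : ℕ, (1/((n:ℝ)+1)^3)) = S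
    push_cast
    field_simp
end
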